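/- Let d, k ≥ 1 be integers and θ ∈ (0,1). There exists a constant C = C(θ, k, d) such that for all x, y ∈ 𝕊^k with x + e₁₁ ∈ 𝕊^k and all t ≥ 0, |p_t^ℓ(x,y) − p_t^ℓ(x + e₁₁, y)| ≤ C (√t + ‖x − y‖ + 1)^{−(kd+θ)}. -/

import Mathlib

open scoped Classical

noncomputable section

namespace SSEPPaper

/-- Configurations of `k` labelled particles on `ℤ^d`. -/
abbrev Conf (d k : ℕ) := Fin k → Fin d → ℤ

/-- Euclidean norm of an integer vector in `ℤ^d`. -/
def vnorm {d : ℕ} (v : Fin d → ℤ) : ℝ := Real.sqrt (∑ j, ((v j : ℝ)) ^ 2)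

/-- Euclidean norm on `(ℝ^d)^k` of an integer configuration. -/
def cnorm {d k : ℕ} (x : Conf d k) : ℝ := Real.sqrt (∑ i, ∑ j, ((x i j : ℝ)) ^ 2)

/-- The set `𝕊^k` of configurations with pairwise distinct particle positions. -/
def SSet (d k : ℕ) : Set (Conf d k) := {x | ∀ i j : Fin k, i ≠ j → x i ≠ x j}

/-- Swap of the coordinates `i` and `j` of a configuration. -/
def cswap {d k : ℕ} (i j : Fin k) (x : Conf d k) : Conf d k := x ∘ Equiv.swap i j

/-- Kronecker delta function at `y`. -/
def deltaFn {α : Type*} (y : α) : α → ℝ := fun x => if x = y then 1 else 0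

/-- Generator of the labelled exclusion process, extended to all of `(ℤ^d)^k`. -/
def Lexc {d k : ℕ} (f : Conf d k → ℝ) : Conf d k → ℝ := fun x =>
  (∑' y : Conf d k, if cnorm (y - x) = 1 ∧ y ∈ SSet d k then f y - f x else 0) +
    ∑ i : Fin k, ∑ j : Fin k,
      if i < j ∧ vnorm (x i - x j) = 1 ∧ x ∈ SSet d k then f (cswap i j x) - f x else 0

/-- Transition probabilities `p_t^ℓ(x,y) = (e^{tL^ℓ} δ_y)(x)` of the labelled exclusion
process, given by the exponential power series of the generator. -/
def ptl {d k : ℕ} (t : ℝ) (x y : Conf d k) : ℝ :=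
  ∑' n : ℕ, t ^ n / n.factorial * ((Lexc (d := d) (k := k))^[n] (deltaFn y)) x

/-- The configuration `e₁₁ = ((1,0,…,0),(0,…,0),…,(0,…,0))`. -/
def e11 (d k : ℕ) : Conf d k := fun i j => if i.val = 0 ∧ j.val = 0 then 1 else 0

/-! ### Edges and stirring -/

abbrev Site (d : ℕ) := Fin d → ℤ

def ev {d : ℕ} (m : Fin d) : Site d := Pi.single m 1

def tau {d : ℕ} (b : Site d × Fin d) : Equiv.Perm (Site d) := Equiv.swap b.1 (b.1 + ev b.2)

def act {d k : ℕ} (b : Site d × Fin d) (x : Conf d k) : Conf d k := fun i => tau b (x i)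

def edgesAt {d : ℕ} (a : Site d) : Finset (Site d × Fin d) :=
  Finset.univ.image (fun m => (a, m)) ∪ Finset.univ.image (fun m => (a - ev m, m))

def edgesOf {d k : ℕ} (x : Conf d k) : Finset (Site d × Fin d) :=
  Finset.univ.biUnion (fun i => edgesAt (x i))

def lap {d : ℕ} (g : Site d → ℝ) (a : Site d) : ℝ :=
  ∑ m, (g (a + ev m) + g (a - ev m) - 2 * g a)

def sq {d : ℕ} (a : Site d) : ℝ := ∑ j, ((a j : ℝ)) ^ 2

def csq {d k : ℕ} (x : Conf d k) : ℝ := ∑ i, sq (x i)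

lemma ev_ne_zero {d : ℕ} (m : Fin d) : ev m ≠ 0 := by
  intro h
  have := congrFun h m
  simp [ev] at this

lemma mem_edgesAt {d : ℕ} (a : Site d) (b : Site d × Fin d) :
    b ∈ edgesAt a ↔ b.1 = a ∨ b.1 + ev b.2 = a := by
  obtain ⟨p, m⟩ := b
  simp only [edgesAt, Finset.mem_union, Finset.mem_image, Finset.mem_univ, true_and, Prod.mk.injEq]
  constructor
  · rintro (⟨m', h1, h2⟩ | ⟨m', h1, h2⟩)
    · exact Or.inl h1.symm
    · right; subst h2; rw [← h1]; simp
  · rintro (h | h)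
    · exact Or.inl ⟨m, h.symm, rfl⟩
    · right; exact ⟨m, by rw [← h]; simp, rfl⟩

lemma tau_fix {d : ℕ} (a : Site d) (b : Site d × Fin d) (h : b ∉ edgesAt a) : tau b a = a := by
  rw [mem_edgesAt] at h
  push Not at h
  exact Equiv.swap_apply_of_ne_of_ne (Ne.symm h.1) (Ne.symm h.2)

lemma tau_left {d : ℕ} (a : Site d) (m : Fin d) : tau (a, m) a = a + ev m := by
  simp [tau]

lemma tau_right {d : ℕ} (a : Site d) (m : Fin d) : tau (a - ev m, m) a = a - ev m := by
  simp [tau]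

lemma sum_edgesAt {d : ℕ} (F : Site d × Fin d → ℝ) (a : Site d) :
    ∑ b ∈ edgesAt a, F b = ∑ m, (F (a, m) + F (a - ev m, m)) := by
  rw [edgesAt, Finset.sum_union, Finset.sum_image, Finset.sum_image, Finset.sum_add_distrib]
  · intro m _ m' _ h
    exact (Prod.mk.inj h).2
  · intro m _ m' _ h
    exact (Prod.mk.inj h).2
  · rw [Finset.disjoint_left]
    intro b hb hb'
    simp only [Finset.mem_image, Finset.mem_univ, true_and] at hb hb'
    obtain ⟨m, rfl⟩ := hb
    obtain ⟨m', h⟩ := hb'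
    have := (Prod.mk.inj h).1
    exact ev_ne_zero m' (by simpa using this)

lemma sum_tau {d : ℕ} (g : Site d → ℝ) (a : Site d) (E : Finset (Site d × Fin d))
    (hE : edgesAt a ⊆ E) : ∑ b ∈ E, (g (tau b a) - g a) = lap g a := by
  rw [← Finset.sum_subset hE, sum_edgesAt]
  · unfold lap
    refine Finset.sum_congr rfl fun m _ => ?_
    rw [tau_left, tau_right]; ring
  · intro b _ hb
    rw [tau_fix a b hb]; ring

lemma act_mem {d k : ℕ} (b : Site d × Fin d) (x : Conf d k) (hx : x ∈ SSet d k) :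
    act b x ∈ SSet d k := by
  intro i j hij h
  exact hx i j hij ((tau b).injective h)

lemma edgesAt_subset {d k : ℕ} (x : Conf d k) (i : Fin k) : edgesAt (x i) ⊆ edgesOf x :=
  Finset.subset_biUnion_of_mem (fun i => edgesAt (x i)) (Finset.mem_univ i)

lemma act_fix {d k : ℕ} (x : Conf d k) (b : Site d × Fin d) (h : b ∉ edgesOf x) :
    act b x = x := by
  funext i
  exact tau_fix _ _ fun hb => h (edgesAt_subset x i hb)

/-- integer vectors of square norm one -/
lemma int_sq_one {ι : Type*} [Fintype ι] [DecidableEq ι] (z : ι → ℤ) (h : ∑ i, z i ^ 2 = 1) :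
    ∃ i, (z i = 1 ∨ z i = -1) ∧ ∀ j, j ≠ i → z j = 0 := by
  have hne : ∃ i, z i ≠ 0 := by
    by_contra hc
    push Not at hc
    simp [hc] at h
  obtain ⟨i, hi⟩ := hne
  rw [← Finset.add_sum_erase _ _ (Finset.mem_univ i)] at h
  have h1 : 0 < z i ^ 2 := by positivity
  have h2 : 0 ≤ ∑ x ∈ Finset.univ.erase i, z x ^ 2 := Finset.sum_nonneg fun _ _ => sq_nonneg _
  have h3 : z i ^ 2 = 1 := by omega
  have h4 : ∑ x ∈ Finset.univ.erase i, z x ^ 2 = 0 := by omega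
  refine ⟨i, by rcases mul_eq_zero.mp (show (z i - 1) * (z i + 1) = 0 by linarith [h3, show (z i - 1) * (z i + 1) = z i ^ 2 - 1 by ring]) with h | h <;> omega, fun j hj => ?_⟩
  rw [Finset.sum_eq_zero_iff_of_nonneg (fun _ _ => sq_nonneg _)] at h4
  have := h4 j (by simp [hj])
  exact pow_eq_zero_iff (two_ne_zero) |>.mp this

lemma sq_one {d : ℕ} (z : Site d) (h : sq z = 1) : ∃ m, z = ev m ∨ z = -ev m := by
  have h' : ∑ i, z i ^ 2 = 1 := by
    unfold sq at h
    exact_mod_cast h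
  obtain ⟨i, hi, hj⟩ := int_sq_one z h'
  refine ⟨i, ?_⟩
  rcases hi with hi | hi
  · left; funext j
    by_cases hji : j = i
    · subst hji; simp [ev, hi]
    · simp [ev, hji, hj j hji]
  · right; funext j
    by_cases hji : j = i
    · subst hji; simp [ev, hi]
    · simp [ev, hji, hj j hji]

lemma sq_ev {d : ℕ} (m : Fin d) : sq (ev m) = 1 := by
  unfold sq ev
  rw [Finset.sum_eq_single m]
  · simp
  · intro j _ hj; simp [hj]
  · simp

lemma sq_neg {d : ℕ} (a : Site d) : sq (-a) = sq a := by simp [sq]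

lemma sq_zero {d : ℕ} : sq (0 : Site d) = 0 := by simp [sq]

lemma sq_nonneg' {d : ℕ} (a : Site d) : 0 ≤ sq a := Finset.sum_nonneg fun _ _ => sq_nonneg _

lemma csq_nonneg {d k : ℕ} (x : Conf d k) : 0 ≤ csq x := Finset.sum_nonneg fun _ _ => sq_nonneg' _

lemma sq_eq_zero {d : ℕ} (a : Site d) : sq a = 0 ↔ a = 0 := by
  constructor
  · intro h
    unfold sq at h
    rw [Finset.sum_eq_zero_iff_of_nonneg (fun _ _ => sq_nonneg _)] at h
    funext j
    have := h j (Finset.mem_univ _)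
    simpa using this
  · rintro rfl; exact sq_zero

lemma vnorm_one {d : ℕ} (a : Site d) : vnorm a = 1 ↔ sq a = 1 := by
  unfold vnorm sq; rw [Real.sqrt_eq_one]

lemma cnorm_one {d k : ℕ} (x : Conf d k) : cnorm x = 1 ↔ csq x = 1 := by
  unfold cnorm csq sq; rw [Real.sqrt_eq_one]

lemma tau_ne {d : ℕ} (a : Site d) (b : Site d × Fin d) (h : b ∈ edgesAt a) :
    (b.1 = a ∧ tau b a = a + ev b.2) ∨ (b.1 + ev b.2 = a ∧ tau b a = a - ev b.2) := by
  rw [mem_edgesAt] at h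
  rcases h with h | h
  · left; refine ⟨h, ?_⟩; subst h; simp [tau]
  · right; refine ⟨h, ?_⟩; subst h; simp [tau]

lemma sq_tau {d : ℕ} (a : Site d) (b : Site d × Fin d) (h : b ∈ edgesAt a) :
    sq (tau b a - a) = 1 := by
  rcases tau_ne a b h with ⟨_, h⟩ | ⟨_, h⟩
  · rw [h]; simp [sq_ev]
  · rw [h]; simp [sq_neg, sq_ev]

/-- the single-particle move determines the edge -/
lemma tau_inj {d : ℕ} (a : Site d) (b b' : Site d × Fin d) (h : b ∈ edgesAt a)
    (h' : b' ∈ edgesAt a) (e : tau b a = tau b' a) : b = b' := by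
  have key : ∀ m m' : Fin d, ev m = ev m' → m = m' := by
    intro m m' h
    by_contra hne
    have := congrFun h m
    simp [ev, hne] at this
  have key2 : ∀ m m' : Fin d, ev m ≠ - ev m' := by
    intro m m' h
    have := congrFun h m
    by_cases hm : m = m'
    · subst hm; simp [ev] at this
    · simp [ev, hm] at this
  obtain ⟨p, m⟩ := b
  obtain ⟨p', m'⟩ := b'
  rcases tau_ne a _ h with ⟨h1, h2⟩ | ⟨h1, h2⟩ <;> rcases tau_ne a _ h' with ⟨h1', h2'⟩ | ⟨h1', h2'⟩
  · simp only at *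
    have : m = m' := key _ _ (by rw [h2, h2'] at e; simpa using e)
    subst this; rw [h1, h1']
  · simp only at *
    exfalso; exact key2 m m' (by rw [h2, h2', sub_eq_add_neg] at e; simpa using e)
  · simp only at *
    exfalso; exact key2 m' m (by rw [h2, h2', sub_eq_add_neg] at e; simpa using e.symm)
  · simp only at *
    have : m = m' := key _ _ (by rw [h2, h2'] at e; simpa using e)
    subst this
    have : p + ev m = p' + ev m := by rw [h1, h1']
    simpa using this

lemma exists_edge {d : ℕ} (a c : Site d) (h : sq (c - a) = 1) :
    ∃ b, b ∈ edgesAt a ∧ b ∈ edgesAt c ∧ tau b = Equiv.swap a c := by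
  obtain ⟨m, hm | hm⟩ := sq_one _ h
  · have hc : c = a + ev m := by rw [← hm]; simp
    refine ⟨(a, m), ?_, ?_, ?_⟩
    · rw [mem_edgesAt]; simp
    · rw [mem_edgesAt]; right; exact hc.symm
    · rw [hc]; rfl
  · have hc : a = c + ev m := by
      have : c = a - ev m := by rw [sub_eq_add_neg, ← hm]; simp
      rw [this]; simp
    refine ⟨(c, m), ?_, ?_, ?_⟩
    · rw [mem_edgesAt]; right; exact hc.symm
    · rw [mem_edgesAt]; simp
    · rw [hc, Equiv.swap_comm]; rfl


lemma tau_two {d : ℕ} (a c : Site d) (b : Site d × Fin d) (ha : b ∈ edgesAt a) (hc : b ∈ edgesAt c)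
    (hac : a ≠ c) : tau b = Equiv.swap a c ∧ sq (a - c) = 1 := by
  rw [mem_edgesAt] at ha hc
  rcases ha with ha | ha <;> rcases hc with hc | hc
  · exact absurd (ha.symm.trans hc) hac
  · subst ha; subst hc
    refine ⟨rfl, ?_⟩
    simp [sq_neg, sq_ev]
  · subst ha; subst hc
    refine ⟨Equiv.swap_comm _ _, ?_⟩
    simp [sq_ev]
  · exact absurd (ha.symm.trans hc) hac

lemma act_swap {d k : ℕ} (x : Conf d k) (hx : x ∈ SSet d k) (i j : Fin k)
    (b : Site d × Fin d) (hb : tau b = Equiv.swap (x i) (x j)) : act b x = cswap i j x := by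
  have hinj : Function.Injective x := by
    intro a c h
    by_contra hne
    exact hx a c hne h
  funext l
  simp only [act, cswap, Function.comp, hb]
  by_cases h1 : l = i
  · subst h1; simp
  by_cases h2 : l = j
  · subst h2; simp
  rw [Equiv.swap_apply_of_ne_of_ne h1 h2,
    Equiv.swap_apply_of_ne_of_ne (fun h => h1 (hinj h)) (fun h => h2 (hinj h))]

lemma mem_edgesOf {d k : ℕ} (x : Conf d k) (b : Site d × Fin d) :
    b ∈ edgesOf x ↔ ∃ i, b ∈ edgesAt (x i) := by
  simp [edgesOf]

lemma csq_act_one {d k : ℕ} (x : Conf d k) (b : Site d × Fin d) (i : Fin k)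
    (h : ∀ j, b ∈ edgesAt (x j) ↔ j = i) : csq (act b x - x) = 1 := by
  unfold csq
  rw [Finset.sum_eq_single i]
  · exact sq_tau _ _ ((h i).2 rfl)
  · intro j _ hj
    have : tau b (x j) = x j := tau_fix _ _ fun hb => hj ((h j).1 hb)
    simp [act, this, sq_zero]
  · simp

lemma csq_one {d k : ℕ} (z : Conf d k) (h : csq z = 1) :
    ∃ i, sq (z i) = 1 ∧ ∀ j, j ≠ i → z j = 0 := by
  have hn : ∀ i, ∃ n : ℕ, sq (z i) = n := by
    intro i
    refine ⟨(∑ j, z i j ^ 2).toNat, ?_⟩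
    have h0 : 0 ≤ ∑ j, z i j ^ 2 := Finset.sum_nonneg fun _ _ => sq_nonneg _
    have : ((∑ j, z i j ^ 2).toNat : ℤ) = ∑ j, z i j ^ 2 := Int.toNat_of_nonneg h0
    unfold sq
    exact_mod_cast this.symm
  choose n hn using hn
  have h' : ∑ i, n i = 1 := by
    unfold csq at h
    simp only [hn] at h
    exact_mod_cast h
  have hex : ∃ i, n i ≠ 0 := by
    by_contra hc
    push Not at hc
    simp [hc] at h'
  obtain ⟨i, hi⟩ := hex
  rw [← Finset.add_sum_erase _ _ (Finset.mem_univ i)] at h'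
  have h3 : n i = 1 := by omega
  have h4 : ∑ l ∈ Finset.univ.erase i, n l = 0 := by omega
  refine ⟨i, by rw [hn, h3]; simp, fun j hj => ?_⟩
  rw [Finset.sum_eq_zero_iff] at h4
  have := h4 j (by simp [hj])
  rw [← sq_eq_zero, hn, this]; simp

lemma Lexc_eq {d k : ℕ} (f : Conf d k → ℝ) (x : Conf d k) (hx : x ∈ SSet d k)
    (E : Finset (Site d × Fin d)) (hE : edgesOf x ⊆ E) :
    Lexc f x = ∑ b ∈ E, (f (act b x) - f x) := by
  rw [← Finset.sum_subset hE (fun b _ hb => by rw [act_fix x b hb]; ring)]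
  have hinj : ∀ i j, x i = x j → i = j := by
    intro a c h
    by_contra hne
    exact hx a c hne h
  rw [← Finset.sum_filter_add_sum_filter_not (edgesOf x)
    (fun b => ∃ i, ∀ j, b ∈ edgesAt (x j) ↔ j = i)]
  unfold Lexc
  congr 1
  · set E1 := (edgesOf x).filter (fun b => ∃ i, ∀ j, b ∈ edgesAt (x j) ↔ j = i) with hE1
    have hmem : ∀ b ∈ E1, cnorm (act b x - x) = 1 ∧ act b x ∈ SSet d k := by
      intro b hb
      obtain ⟨_, i, hi⟩ := Finset.mem_filter.1 hb
      exact ⟨(cnorm_one _).2 (csq_act_one x b i hi), act_mem b x hx⟩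
    have hinj_act : Set.InjOn (fun b => act b x) (E1 : Set (Site d × Fin d)) := by
      intro b hb b' hb' h
      obtain ⟨_, i, hi⟩ := Finset.mem_filter.1 (Finset.mem_coe.1 hb)
      obtain ⟨_, i', hi'⟩ := Finset.mem_filter.1 (Finset.mem_coe.1 hb')
      have hbi := (hi i).2 rfl
      have hii : i = i' := by
        by_contra hne
        have h1 : tau b' (x i) = x i := tau_fix _ _ fun hb => hne ((hi' i).1 hb)
        have h2 := sq_tau _ _ hbi
        have h3 : tau b (x i) = tau b' (x i) := congrFun h i
        rw [h3, h1] at h2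
        simp [sq_zero] at h2
      subst hii
      exact tau_inj (x i) b b' hbi ((hi' i).2 rfl) (congrFun h i)
    rw [tsum_eq_sum (s := E1.image (fun b => act b x))]
    · rw [Finset.sum_image hinj_act]
      refine Finset.sum_congr rfl fun b hb => ?_
      rw [if_pos (hmem b hb)]
    · intro y hy
      rw [if_neg]
      rintro ⟨h1, h2⟩
      apply hy
      rw [cnorm_one] at h1
      obtain ⟨i, hi, hj⟩ := csq_one _ h1
      obtain ⟨b, hb1, hb2, hb3⟩ := exists_edge (x i) (y i) hi
      have hother : ∀ j, j ≠ i → b ∉ edgesAt (x j) := by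
        intro j hji hb
        have hyj : y j = x j := by
          have := hj j hji
          simpa [sub_eq_zero] using this
        have h3 := (tau_two (x i) (x j) b hb1 hb (hx i j (Ne.symm hji))).1
        have h4 : tau b (x i) = x j := by rw [h3]; simp
        rw [hb3] at h4
        simp only [Equiv.swap_apply_left] at h4
        exact h2 i j (Ne.symm hji) (h4.trans hyj.symm)
      refine Finset.mem_image.2 ⟨b, Finset.mem_filter.2 ⟨(mem_edgesOf _ _).2 ⟨i, hb1⟩, i, ?_⟩, ?_⟩
      · intro j
        constructor
        · intro h; by_contra hne; exact hother j hne h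
        · rintro rfl; exact hb1
      · funext j
        by_cases hji : j = i
        · subst hji; simp [act, hb3]
        · have hyj : y j = x j := by
            have := hj j hji
            simpa [sub_eq_zero] using this
          rw [hyj]; exact tau_fix _ _ (hother j hji)
  · rw [← Finset.sum_product', ← Finset.sum_filter]
    have hadj : ∀ p : Fin k × Fin k, p ∈ (Finset.univ ×ˢ Finset.univ).filter (fun p : Fin k × Fin k =>
        p.1 < p.2 ∧ vnorm (x p.1 - x p.2) = 1 ∧ x ∈ SSet d k) → 
        ∃ b, b ∈ edgesAt (x p.1) ∧ b ∈ edgesAt (x p.2) ∧ tau b = Equiv.swap (x p.1) (x p.2) := by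
      intro p hp
      have h := (Finset.mem_filter.1 hp).2
      apply exists_edge
      rw [← neg_sub, sq_neg]
      exact (vnorm_one _).1 h.2.1
    refine Finset.sum_bij (fun p hp => Classical.choose (hadj p hp)) ?_ ?_ ?_ ?_
    · intro p hp
      obtain ⟨h1, h2, h3⟩ := Classical.choose_spec (hadj p hp)
      refine Finset.mem_filter.2 ⟨(mem_edgesOf _ _).2 ⟨_, h1⟩, ?_⟩
      rintro ⟨i, hi⟩
      have hlt := (Finset.mem_filter.1 hp).2.1
      exact hlt.ne (((hi _).1 h1).trans ((hi _).1 h2).symm)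
    · intro p hp p' hp' h
      obtain ⟨h1, h2, h3⟩ := Classical.choose_spec (hadj p hp)
      obtain ⟨h1', h2', h3'⟩ := Classical.choose_spec (hadj p' hp')
      rw [h] at h1 h2 h3
      have hlt := (Finset.mem_filter.1 hp).2.1
      have hlt' := (Finset.mem_filter.1 hp').2.1
      rw [mem_edgesAt] at h1 h2 h1' h2'
      obtain ⟨i, j⟩ := p
      obtain ⟨i', j'⟩ := p'
      simp only at *
      have hne : i ≠ j := hlt.ne
      have hne' : i' ≠ j' := hlt'.ne
      have A : ∀ {u v : Fin k} {w : Site d}, w = x u → w = x v → u = v := 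
        fun h h' => hinj _ _ (h.symm.trans h')
      rcases h1 with h1 | h1 <;> rcases h2 with h2 | h2
      · exact absurd (A h1 h2) hne
      · rcases h1' with h1' | h1' <;> rcases h2' with h2' | h2'
        · exact absurd (A h1' h2') hne'
        · rw [A h1 h1', A h2 h2']
        · rw [A h1 h2', A h2 h1'] at hlt; exact absurd hlt hlt'.not_gt
        · exact absurd (A h1' h2') hne'
      · rcases h1' with h1' | h1' <;> rcases h2' with h2' | h2'
        · exact absurd (A h1' h2') hne'
        · rw [A h1 h2', A h2 h1'] at hlt; exact absurd hlt hlt'.not_gt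
        · rw [A h1 h1', A h2 h2']
        · exact absurd (A h1' h2') hne'
      · exact absurd (A h1 h2) hne
    · intro b hb
      obtain ⟨hb1, hb2⟩ := Finset.mem_filter.1 hb
      obtain ⟨i, hi⟩ := (mem_edgesOf _ _).1 hb1
      have : ∃ j, j ≠ i ∧ b ∈ edgesAt (x j) := by
        by_contra hc
        push Not at hc
        refine hb2 ⟨i, fun j => ⟨fun h => ?_, ?_⟩⟩
        · by_contra hne; exact hc j hne h
        · rintro rfl; exact hi
      obtain ⟨j, hji, hj⟩ := this
      have main : ∀ i j : Fin k, i < j → b ∈ edgesAt (x i) → b ∈ edgesAt (x j) → 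
          ∃ a, ∃ ha : a ∈ (Finset.univ ×ˢ Finset.univ).filter (fun p : Fin k × Fin k =>
            p.1 < p.2 ∧ vnorm (x p.1 - x p.2) = 1 ∧ x ∈ SSet d k), 
            Classical.choose (hadj a ha) = b := by
        intro i j hij hi hj
        obtain ⟨h1, h2⟩ := tau_two _ _ b hi hj (hx i j hij.ne)
        have ha : (i, j) ∈ (Finset.univ ×ˢ Finset.univ).filter (fun p : Fin k × Fin k =>
            p.1 < p.2 ∧ vnorm (x p.1 - x p.2) = 1 ∧ x ∈ SSet d k) := by
          simp only [Finset.mem_filter, Finset.mem_product, Finset.mem_univ, true_and]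
          exact ⟨hij, (vnorm_one _).2 h2, hx⟩
        refine ⟨(i, j), ha, ?_⟩
        obtain ⟨g1, g2, g3⟩ := Classical.choose_spec (hadj _ ha)
        exact tau_inj (x i) _ _ g1 hi (by rw [g3, h1])
      rcases lt_or_gt_of_ne hji with h | h
      · exact main j i h hj hi
      · exact main i j h hi hj
    · intro p hp
      obtain ⟨h1, h2, h3⟩ := Classical.choose_spec (hadj p hp)
      rw [act_swap x hx p.1 p.2 _ h3]

/-! ### The semigroup -/

lemma card_edgesOf {d k : ℕ} (x : Conf d k) : ((edgesOf x).card : ℝ) ≤ 2 * k * d := by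
  have h1 : (edgesOf x).card ≤ ∑ i : Fin k, (edgesAt (x i)).card := Finset.card_biUnion_le
  have h2 : ∀ a : Site d, (edgesAt a).card ≤ 2 * d := by
    intro a
    refine (Finset.card_union_le _ _).trans ?_
    have e1 := Finset.card_image_le (s := (Finset.univ : Finset (Fin d))) (f := fun m => (a, m))
    have e2 := Finset.card_image_le (s := (Finset.univ : Finset (Fin d))) (f := fun m => (a - ev m, m))
    simp only [Finset.card_univ, Fintype.card_fin] at e1 e2
    omega
  have h3 : ∑ i : Fin k, (edgesAt (x i)).card ≤ ∑ i : Fin k, 2 * d := Finset.sum_le_sum fun i _ => h2 _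
  simp only [Finset.sum_const, Finset.card_univ, Fintype.card_fin, smul_eq_mul] at h3
  have : (edgesOf x).card ≤ k * (2 * d) := h1.trans h3
  have h4 : ((edgesOf x).card : ℝ) ≤ ((k * (2 * d) : ℕ) : ℝ) := by exact_mod_cast this
  push_cast at h4
  linarith

lemma Lexc_bound {d k : ℕ} (f : Conf d k → ℝ) (A : ℝ) (hA : ∀ z ∈ SSet d k, |f z| ≤ A)
    (x : Conf d k) (hx : x ∈ SSet d k) : |Lexc f x| ≤ (4 * k * d) * A := by
  have hA0 : 0 ≤ A := (abs_nonneg _).trans (hA x hx)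
  rw [Lexc_eq f x hx _ subset_rfl]
  calc |∑ b ∈ edgesOf x, (f (act b x) - f x)| ≤ ∑ b ∈ edgesOf x, |f (act b x) - f x| :=
        Finset.abs_sum_le_sum_abs _ _
    _ ≤ ∑ b ∈ edgesOf x, 2 * A := by
        refine Finset.sum_le_sum fun b _ => ?_
        have h1 := abs_le.1 (hA _ (act_mem b x hx))
        have h2 := abs_le.1 (hA x hx)
        rw [abs_le]; constructor <;> linarith
    _ = (edgesOf x).card * (2 * A) := by simp
    _ ≤ (2 * k * d) * (2 * A) := mul_le_mul_of_nonneg_right (card_edgesOf x) (by linarith)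
    _ = _ := by ring

lemma iter_bound {d k : ℕ} (y : Conf d k) (n : ℕ) : ∀ x ∈ SSet d k,
    |((Lexc (d := d) (k := k))^[n] (deltaFn y)) x| ≤ (4 * k * d : ℝ) ^ n := by
  induction n with
  | zero =>
    intro x _
    simp only [Function.iterate_zero, id, pow_zero, deltaFn]
    split_ifs <;> simp
  | succ n ih =>
    intro x hx
    rw [Function.iterate_succ_apply']
    refine (Lexc_bound _ _ ih x hx).trans (le_of_eq ?_)
    ring

lemma exp_series_term_bound (a : ℕ → ℝ) (Λ : ℝ) (ha : ∀ n, |a n| ≤ Λ ^ n) (t : ℝ) (n : ℕ) :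
    ‖t ^ n / n.factorial * a n‖ ≤ (|t| * Λ) ^ n / n.factorial := by
  rw [Real.norm_eq_abs, abs_mul, abs_div, abs_pow, Nat.abs_cast, mul_pow, mul_div_right_comm]
  exact mul_le_mul_of_nonneg_left (ha n) (by positivity)

lemma exp_series_summable (a : ℕ → ℝ) (Λ : ℝ) (ha : ∀ n, |a n| ≤ Λ ^ n) (t : ℝ) :
    Summable fun n : ℕ => t ^ n / n.factorial * a n :=
  Summable.of_norm_bounded (Real.summable_pow_div_factorial (|t| * Λ))
    (exp_series_term_bound a Λ ha t)

lemma exp_series_bound (a : ℕ → ℝ) (Λ : ℝ) (ha : ∀ n, |a n| ≤ Λ ^ n) (t : ℝ) :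
    |∑' n : ℕ, t ^ n / n.factorial * a n| ≤ Real.exp (|t| * Λ) := by
  have h := tsum_of_norm_bounded (f := fun n : ℕ => t ^ n / n.factorial * a n)
    (Real.summable_pow_div_factorial (|t| * Λ)).hasSum (exp_series_term_bound a Λ ha t)
  rw [Real.exp_eq_exp_ℝ, NormedSpace.exp_eq_tsum_div]
  exact h

lemma exp_series_deriv (a : ℕ → ℝ) (Λ : ℝ) (hΛ : 0 ≤ Λ) (ha : ∀ n, |a n| ≤ Λ ^ n) (t : ℝ) :
    HasDerivAt (fun t : ℝ => ∑' n : ℕ, t ^ n / n.factorial * a n)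
      (∑' n : ℕ, t ^ n / n.factorial * a (n + 1)) t := by
  set T := |t| + 1 with hT
  have hT0 : 0 ≤ T := by positivity
  have hshift : Summable fun n : ℕ => (T * Λ) ^ n / n.factorial * Λ :=
    (Real.summable_pow_div_factorial (T * Λ)).mul_right _
  set g' : ℕ → ℝ → ℝ := fun n s => n * s ^ (n - 1) / n.factorial * a n with hg'
  have hg'succ : ∀ n s, g' (n + 1) s = s ^ n / n.factorial * a (n + 1) := by
    intro n s
    simp only [hg', Nat.add_sub_cancel, Nat.factorial_succ]
    have : ((n + 1 : ℕ) : ℝ) ≠ 0 := by positivity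
    have h2 : (n.factorial : ℝ) ≠ 0 := by positivity
    push_cast at this ⊢
    field_simp
  set u : ℕ → ℝ := fun n => match n with
    | 0 => 0
    | (n + 1) => (T * Λ) ^ n / n.factorial * Λ with hu
  have hus : Summable u := (summable_nat_add_iff 1).1 hshift
  have key := hasDerivAt_tsum_of_isPreconnected (g := fun n s => s ^ n / n.factorial * a n) (g' := g')
    (t := Metric.ball (0 : ℝ) T) (y₀ := 0) (y := t) (u := u) hus Metric.isOpen_ball
    (convex_ball (0 : ℝ) T).isPreconnected ?_ ?_ ?_ ?_ ?_
  · have h0 : ∑' n, g' n t = ∑' n : ℕ, t ^ n / n.factorial * a (n + 1) := by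
      have hs : Summable fun n => g' n t := by
        rw [← summable_nat_add_iff 1]
        simp only [hg'succ]
        refine Summable.of_norm_bounded ((Real.summable_pow_div_factorial (|t| * Λ)).mul_right Λ) ?_
        intro n
        rw [Real.norm_eq_abs, abs_mul, abs_div, abs_pow, Nat.abs_cast, mul_pow]
        have := mul_le_mul_of_nonneg_left (ha (n + 1)) (show 0 ≤ |t| ^ n / (n.factorial : ℝ) by positivity)
        refine this.trans (le_of_eq ?_)
        ring
      rw [hs.tsum_eq_zero_add]
      simp only [hg'succ]
      simp [hg']
    rw [← h0]
    exact key
  · intro n s _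
    simp only [hg']
    exact ((hasDerivAt_pow n s).div_const _).mul_const _
  · intro n s hs
    have hs' : |s| ≤ T := by
      rw [Metric.mem_ball, dist_zero_right, Real.norm_eq_abs] at hs
      exact hs.le
    cases n with
    | zero => simp [hg', hu]
    | succ n =>
      rw [hg'succ]
      simp only [hu]
      rw [Real.norm_eq_abs, abs_mul, abs_div, abs_pow, Nat.abs_cast, mul_pow]
      calc |s| ^ n / (n.factorial : ℝ) * |a (n + 1)| ≤ T ^ n / (n.factorial : ℝ) * Λ ^ (n + 1) := by
            gcongr
            exact ha _
        _ = _ := by ring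
  · simpa using lt_of_le_of_lt (abs_nonneg t) (lt_add_one |t|)
  · exact exp_series_summable a Λ ha 0
  · simp [hT]

lemma ptl_bound {d k : ℕ} (y x : Conf d k) (hx : x ∈ SSet d k) (t : ℝ) :
    |ptl t x y| ≤ Real.exp (|t| * (4 * k * d)) :=
  exp_series_bound _ _ (fun n => iter_bound y n x hx) t

lemma ptl_zero {d k : ℕ} (y x : Conf d k) : ptl 0 x y = deltaFn y x := by
  unfold ptl
  rw [tsum_eq_single 0]
  · simp
  · intro n hn; simp [hn]

lemma ptl_deriv {d k : ℕ} (y x : Conf d k) (hx : x ∈ SSet d k) (t : ℝ) :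
    HasDerivAt (fun t => ptl t x y) (Lexc (fun z => ptl t z y) x) t := by
  have h := exp_series_deriv _ _ (by positivity) (fun n => iter_bound y n x hx) t
  unfold ptl at *
  convert h using 1
  rw [Lexc_eq _ x hx _ subset_rfl]
  have hs : ∀ z ∈ SSet d k, Summable fun n : ℕ => t ^ n / n.factorial *
      ((Lexc (d := d) (k := k))^[n] (deltaFn y)) z := fun z hz =>
    exp_series_summable _ _ (fun n => iter_bound y n z hz) t
  have h1 : ∀ b ∈ edgesOf x, (∑' n : ℕ, t ^ n / n.factorial *
      ((Lexc (d := d) (k := k))^[n] (deltaFn y)) (act b x)) - (∑' n : ℕ, t ^ n / n.factorial *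
      ((Lexc (d := d) (k := k))^[n] (deltaFn y)) x) = ∑' n : ℕ, (t ^ n / n.factorial *
      ((Lexc (d := d) (k := k))^[n] (deltaFn y)) (act b x) - t ^ n / n.factorial *
      ((Lexc (d := d) (k := k))^[n] (deltaFn y)) x) := fun b _ =>
    ((hs _ (act_mem b x hx)).tsum_sub (hs _ hx)).symm
  rw [Finset.sum_congr rfl h1, ← Summable.tsum_finsetSum]
  · refine tsum_congr fun n => ?_
    rw [Function.iterate_succ_apply', Lexc_eq _ x hx _ subset_rfl, Finset.mul_sum]
    refine Finset.sum_congr rfl fun b _ => ?_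
    ring
  · intro b _
    exact (hs _ (act_mem b x hx)).sub (hs _ hx)

/-! ### Maximum principles -/

lemma finite_max {Ω : Type*} (F : Finset Ω) (f f' : ℝ → Ω → ℝ) (t1 T : ℝ)
    (h : ∀ x ∈ F, ∀ t ∈ Set.Icc t1 T, HasDerivAt (fun s => f s x) (f' t x) t)
    (h0 : ∀ x ∈ F, f t1 x ≤ 0)
    (hm : ∀ x ∈ F, ∀ t ∈ Set.Ioc t1 T, 0 < f t x → (∀ z ∈ F, f t z ≤ f t x) → f' t x < 0) :
    ∀ x ∈ F, ∀ t ∈ Set.Icc t1 T, f t x ≤ 0 := by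
  intro x0 hx0 t0 ht0
  by_contra hpos
  push Not at hpos
  have hne : (Set.Icc t1 T).Nonempty := ⟨t0, ht0⟩
  have hmax : ∀ x ∈ F, ∃ s ∈ Set.Icc t1 T, ∀ t ∈ Set.Icc t1 T, f t x ≤ f s x := by
    intro x hx
    obtain ⟨s, hs, hs'⟩ := isCompact_Icc.exists_isMaxOn hne
      (f := fun s => f s x) (fun t ht => (h x hx t ht).continuousAt.continuousWithinAt)
    exact ⟨s, hs, fun t ht => hs' ht⟩
  choose! σ hσ hσ' using hmax
  obtain ⟨x, hx, hxm⟩ := F.exists_max_image (fun x => f (σ x) x) ⟨x0, hx0⟩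
  have hval : 0 < f (σ x) x := lt_of_lt_of_le hpos ((hσ' x0 hx0 t0 ht0).trans (hxm x0 hx0))
  have hgt : t1 < σ x := by
    rcases eq_or_lt_of_le (hσ x hx).1 with he | hl
    · rw [← he] at hval; exact absurd (h0 x hx) (not_le.2 hval)
    · exact hl
  have hneg := hm x hx (σ x) ⟨hgt, (hσ x hx).2⟩ hval
    (fun z hz => (hσ' z hz _ (hσ x hx)).trans (hxm z hz))
  have hd := (h x hx (σ x) (hσ x hx)).hasDerivWithinAt (s := Set.Iio (σ x))
  have hd2 := (hasDerivWithinAt_iff_tendsto_slope' (by simp)).1 hd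
  have hev : ∀ᶠ t in nhdsWithin (σ x) (Set.Iio (σ x)), slope (fun s => f s x) (σ x) t < 0 :=
    hd2.eventually (gt_mem_nhds hneg)
  have hev2 : ∀ᶠ t in nhdsWithin (σ x) (Set.Iio (σ x)), t ∈ Set.Ioo t1 (σ x) :=
    Ioo_mem_nhdsLT hgt
  obtain ⟨t, ht1, ht2⟩ := (hev.and hev2).exists
  rw [slope_def_field, div_neg_iff] at ht1
  have := hσ' x hx t ⟨ht2.1.le, ht2.2.le.trans (hσ x hx).2⟩
  have h3 := ht2.2
  rcases ht1 with ⟨h1, h2⟩ | ⟨h1, h2⟩ <;> linarith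

lemma Lexc_add {d k : ℕ} (f g : Conf d k → ℝ) (x : Conf d k) (hx : x ∈ SSet d k) :
    Lexc (fun z => f z + g z) x = Lexc f x + Lexc g x := by
  simp only [Lexc_eq _ x hx _ subset_rfl]
  rw [← Finset.sum_add_distrib]
  exact Finset.sum_congr rfl fun b _ => by ring

lemma Lexc_mul {d k : ℕ} (c : ℝ) (f : Conf d k → ℝ) (x : Conf d k) (hx : x ∈ SSet d k) :
    Lexc (fun z => c * f z) x = c * Lexc f x := by
  simp only [Lexc_eq _ x hx _ subset_rfl]
  rw [Finset.mul_sum]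
  exact Finset.sum_congr rfl fun b _ => by ring

lemma Lexc_sub {d k : ℕ} (f g : Conf d k → ℝ) (x : Conf d k) (hx : x ∈ SSet d k) :
    Lexc (fun z => f z - g z) x = Lexc f x - Lexc g x := by
  simp only [Lexc_eq _ x hx _ subset_rfl]
  rw [← Finset.sum_sub_distrib]
  exact Finset.sum_congr rfl fun b _ => by ring

lemma Lexc_const {d k : ℕ} (c : ℝ) (x : Conf d k) (hx : x ∈ SSet d k) :
    Lexc (fun _ => c) x = 0 := by
  simp [Lexc_eq _ x hx _ subset_rfl]

/-- additive functions -/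
lemma Lexc_additive {d k : ℕ} (g : Fin k → Site d → ℝ) (x : Conf d k) (hx : x ∈ SSet d k) :
    Lexc (fun z => ∑ i, g i (z i)) x = ∑ i, lap (g i) (x i) := by
  rw [Lexc_eq _ x hx _ subset_rfl]
  simp only [← Finset.sum_sub_distrib]
  rw [Finset.sum_comm]
  exact Finset.sum_congr rfl fun i _ => sum_tau (g i) (x i) _ (edgesAt_subset x i)

lemma lap_sum {d : ℕ} (g : Fin d → ℤ → ℝ) (a : Site d) :
    lap (fun a => ∑ m, g m (a m)) a = ∑ m, (g m (a m + 1) + g m (a m - 1) - 2 * g m (a m)) := by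
  unfold lap
  refine Finset.sum_congr rfl fun m _ => ?_
  have h : ∀ s : ℤ, (∑ l, g l ((a + s • ev m) l)) - ∑ l, g l (a l) = g m (a m + s) - g m (a m) := by
    intro s
    rw [← Finset.sum_sub_distrib, Finset.sum_eq_single m]
    · simp [ev]
    · intro j _ hj; simp [ev, hj]
    · simp
  have h1 := h 1
  have h2 := h (-1)
  simp only [one_smul, neg_smul, ← sub_eq_add_neg] at h1 h2
  linarith

lemma lap_sq {d : ℕ} (c a : Site d) : lap (fun a => sq (a - c)) a = 2 * d := by
  have := lap_sum (fun m (v : ℤ) => ((v : ℝ) - c m) ^ 2) a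
  have h : (fun a : Site d => sq (a - c)) = fun a => ∑ m, ((a m : ℝ) - c m) ^ 2 := by
    funext a; unfold sq; refine Finset.sum_congr rfl fun m _ => by simp
  rw [h, this]
  have : ∀ m ∈ (Finset.univ : Finset (Fin d)), ((((a m + 1 : ℤ) : ℝ) - c m) ^ 2 + (((a m - 1 : ℤ) : ℝ) - c m) ^ 2
      - 2 * ((a m : ℝ) - c m) ^ 2) = 2 := by
    intro m _; push_cast; ring
  rw [Finset.sum_congr rfl this]; simp; ring

lemma Lexc_csq {d k : ℕ} (c x : Conf d k) (hx : x ∈ SSet d k) :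
    Lexc (fun z => csq (z - c)) x = 2 * k * d := by
  have := Lexc_additive (fun i a => sq (a - c i)) x hx
  unfold csq
  simp only [Pi.sub_apply]
  rw [this]
  simp only [lap_sq]
  simp; ring

lemma csq_finite {d k : ℕ} (c : Conf d k) (K : ℝ) : {z : Conf d k | csq (z - c) ≤ K}.Finite := by
  obtain ⟨N, hN⟩ := exists_nat_ge K
  refine Set.Finite.subset (Set.finite_Icc (c - fun _ _ => (N : ℤ)) (c + fun _ _ => (N : ℤ))) ?_
  intro z hz
  have key : ∀ i j, |z i j - c i j| ≤ (N : ℤ) := by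
    intro i j
    have h1 : ((z i j : ℝ) - c i j) ^ 2 ≤ csq (z - c) := by
      have e1 : ((z i j : ℝ) - c i j) ^ 2 ≤ sq ((z - c) i) := by
        have := Finset.single_le_sum (f := fun j => (((z - c) i j : ℤ) : ℝ) ^ 2) (s := Finset.univ)
          (fun _ _ => sq_nonneg _) (Finset.mem_univ j)
        simpa [sq] using this
      exact e1.trans (Finset.single_le_sum (f := fun i => sq ((z - c) i)) (s := Finset.univ)
          (fun _ _ => sq_nonneg' _) (Finset.mem_univ i))
    have h2 : ((z i j : ℝ) - c i j) ^ 2 ≤ N := h1.trans (le_trans hz hN)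
    have h3 : (z i j - c i j) ^ 2 ≤ (N : ℤ) := by exact_mod_cast h2
    have h4 : |z i j - c i j| ≤ |z i j - c i j| ^ 2 := by
      have h0 := abs_nonneg (z i j - c i j)
      rcases h0.eq_or_lt with h | h
      · rw [← h]; simp
      · nlinarith
    rw [sq_abs] at h4
    exact h4.trans h3
  constructor
  · intro i j
    have := abs_le.1 (key i j)
    simp only [Pi.sub_apply]; omega
  · intro i j
    have := abs_le.1 (key i j)
    simp only [Pi.add_apply]; omega

lemma max_principle {d k : ℕ} (v v' : ℝ → Conf d k → ℝ) (T Bd : ℝ)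
    (hd : ∀ x ∈ SSet d k, ∀ t ∈ Set.Icc 0 T, HasDerivAt (fun s => v s x) (v' t x) t)
    (hb : ∀ x ∈ SSet d k, ∀ t ∈ Set.Icc 0 T, v t x ≤ Bd)
    (h0 : ∀ x ∈ SSet d k, v 0 x ≤ 0)
    (hm : ∀ x ∈ SSet d k, ∀ t ∈ Set.Icc 0 T, 0 < v t x → v' t x ≤ Lexc (v t) x) :
    ∀ x ∈ SSet d k, ∀ t ∈ Set.Icc 0 T, v t x ≤ 0 := by
  have main : ∀ ε : ℝ, 0 < ε → ∀ x ∈ SSet d k, ∀ t ∈ Set.Icc 0 T, 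
      v t x ≤ ε * (csq (x - 0) + (2 * k * d + 1) * t) := by
    intro ε hε x hx t ht
    set K := max (Bd / ε) (csq (x - 0)) with hK
    set F := ((csq_finite (0 : Conf d k) K).toFinset).filter (fun z => z ∈ SSet d k) with hF
    have hFm : ∀ z, z ∈ F ↔ csq (z - 0) ≤ K ∧ z ∈ SSet d k := by
      intro z; simp [hF]
    have hout : ∀ z ∈ SSet d k, z ∉ F → ∀ t ∈ Set.Icc 0 T, 
        v t z - ε * (csq (z - 0) + (2 * k * d + 1) * t) ≤ 0 := by
      intro z hz hzF t ht
      rw [hFm] at hzF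
      have h1 : K < csq (z - 0) := by
        by_contra hc; exact hzF ⟨not_lt.1 hc, hz⟩
      have h2 : Bd / ε ≤ K := le_max_left _ _
      have h3 : Bd < ε * csq (z - 0) := by
        rw [← div_lt_iff₀' hε]; linarith
      have h4 := hb z hz t ht
      have h5 : 0 ≤ ε * ((2 * k * d + 1) * t) := by have := ht.1; positivity
      nlinarith
    have := finite_max F (fun t z => v t z - ε * (csq (z - 0) + (2 * k * d + 1) * t))
      (fun t z => v' t z - ε * (2 * k * d + 1)) 0 T ?_ ?_ ?_ x ((hFm x).2 ⟨le_max_right _ _, hx⟩) t ht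
    · linarith
    · intro z hz t ht
      refine (hd z ((hFm z).1 hz).2 t ht).sub ?_
      have : HasDerivAt (fun s : ℝ => csq (z - 0) + (2 * k * d + 1) * s) (2 * k * d + 1) t := by
        simpa using ((hasDerivAt_id t).const_mul (2 * k * d + 1 : ℝ)).const_add (csq (z - 0))
      exact this.const_mul ε
    · intro z hz
      have := h0 z ((hFm z).1 hz).2
      have h2 : 0 ≤ ε * csq (z - 0) := mul_nonneg hε.le (csq_nonneg _)
      nlinarith
    · intro z hz t ht hpos hmax
      have hzS := ((hFm z).1 hz).2
      have ht' : t ∈ Set.Icc 0 T := ⟨ht.1.le, ht.2⟩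
      have hvpos : 0 < v t z := by
        have h1 : 0 ≤ csq (z - 0) := csq_nonneg _
        have h5 : 0 ≤ ε * (csq (z - 0) + (2 * k * d + 1) * t) := by
          have := ht'.1; positivity
        linarith
      have h1 := hm z hzS t ht' hvpos
      have h2 : Lexc (fun z => v t z - ε * (csq (z - 0) + (2 * k * d + 1) * t)) z ≤ 0 := by
        rw [Lexc_eq _ z hzS _ subset_rfl]
        refine Finset.sum_nonpos fun b _ => ?_
        by_cases hb : act b z ∈ F
        · linarith [hmax _ hb]
        · linarith [hout _ (act_mem b z hzS) hb t ht']
      rw [Lexc_sub _ _ z hzS, Lexc_mul _ _ z hzS, Lexc_add _ _ z hzS, Lexc_csq _ _ hzS,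
        Lexc_const _ _ hzS] at h2
      have h3 : Lexc (v t) z ≤ ε * (2 * k * d) := by
        have : Lexc (v t) z = Lexc (fun z => v t z) z := rfl
        linarith
      linarith
  intro x hx t ht
  by_contra hc
  push Not at hc
  set Q := csq (x - 0) + (2 * k * d + 1) * t with hQ
  have hQ0 : 0 ≤ Q := by
    have h1 : 0 ≤ csq (x - 0) := csq_nonneg _
    have := ht.1
    positivity
  have := main (v t x / (2 * (Q + 1))) (by positivity) x hx t ht
  rw [div_mul_eq_mul_div, le_div_iff₀ (by positivity)] at this
  nlinarith

lemma ptl_nonneg {d k : ℕ} (y x : Conf d k) (hx : x ∈ SSet d k) (t : ℝ) (ht : 0 ≤ t) :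
    0 ≤ ptl t x y := by
  have := max_principle (fun t z => (-1) * ptl t z y) (fun t z => (-1) * Lexc (fun z => ptl t z y) z) t
    (Real.exp (t * (4 * k * d))) ?_ ?_ ?_ ?_ x hx t ⟨ht, le_rfl⟩
  · linarith
  · intro z hz s _
    exact (ptl_deriv y z hz s).const_mul _
  · intro z hz s hs
    have h1 := (abs_le.1 (ptl_bound y z hz s)).1
    rw [abs_of_nonneg hs.1] at h1
    have : Real.exp (s * (4 * k * d)) ≤ Real.exp (t * (4 * k * d)) := by
      apply Real.exp_le_exp.2
      exact mul_le_mul_of_nonneg_right hs.2 (by positivity)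
    linarith
  · intro z hz
    rw [ptl_zero]
    unfold deltaFn
    split_ifs <;> simp
  · intro z hz s _ _
    rw [Lexc_mul _ _ z hz]

/-! ### One-dimensional heat kernel -/

def g1 (t : ℝ) (a : ℤ) : ℝ :=
  (2 * Real.pi)⁻¹ * ∫ θ in (-Real.pi)..Real.pi, Real.cos (a * θ) * Real.exp (-2 * t * (1 - Real.cos θ))

lemma g1_cont (t : ℝ) (a : ℤ) :
    Continuous fun θ : ℝ => Real.cos (a * θ) * Real.exp (-2 * t * (1 - Real.cos θ)) := by fun_prop

lemma g1_deriv (t : ℝ) (a : ℤ) :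
    HasDerivAt (fun t => g1 t a) (g1 t (a + 1) + g1 t (a - 1) - 2 * g1 t a) t := by
  have key := intervalIntegral.hasDerivAt_integral_of_dominated_loc_of_deriv_le
    (μ := MeasureTheory.volume) (a := -Real.pi) (b := Real.pi)
    (F := fun t θ => Real.cos (a * θ) * Real.exp (-2 * t * (1 - Real.cos θ)))
    (F' := fun t θ => Real.cos (a * θ) * (Real.exp (-2 * t * (1 - Real.cos θ)) * (-2 * (1 - Real.cos θ))))
    (x₀ := t) (s := Metric.ball t 1) (bound := fun _ => Real.exp (4 * (|t| + 1)) * 4)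
    (Metric.ball_mem_nhds t one_pos)
    (Filter.Eventually.of_forall fun s => (g1_cont s a).aestronglyMeasurable)
    ((g1_cont t a).intervalIntegrable _ _)
    (by
      apply Continuous.aestronglyMeasurable
      fun_prop)
    ?_ (by simp) ?_
  · have h2 := key.2.const_mul (2 * Real.pi)⁻¹
    unfold g1
    refine h2.congr_deriv ?_
    have e : ∀ θ : ℝ, Real.cos (a * θ) * (Real.exp (-2 * t * (1 - Real.cos θ)) * (-2 * (1 - Real.cos θ))) =
      Real.cos (((a + 1 : ℤ) : ℝ) * θ) * Real.exp (-2 * t * (1 - Real.cos θ)) +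
      Real.cos (((a - 1 : ℤ) : ℝ) * θ) * Real.exp (-2 * t * (1 - Real.cos θ)) -
      2 * (Real.cos (a * θ) * Real.exp (-2 * t * (1 - Real.cos θ))) := by
      intro θ
      push_cast
      rw [add_mul, sub_mul, one_mul, Real.cos_add, Real.cos_sub]
      ring
    simp only [e]
    rw [intervalIntegral.integral_sub, intervalIntegral.integral_add, intervalIntegral.integral_const_mul]
    · ring
    · exact (g1_cont t _).intervalIntegrable _ _
    · exact (g1_cont t _).intervalIntegrable _ _
    · exact ((g1_cont t _).intervalIntegrable _ _).add ((g1_cont t _).intervalIntegrable _ _)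
    · exact ((g1_cont t _).intervalIntegrable _ _).const_mul _
  · refine Filter.Eventually.of_forall fun θ _ s hs => ?_
    have hs' : |s| ≤ |t| + 1 := by
      rw [Metric.mem_ball, Real.dist_eq] at hs
      have := abs_sub_abs_le_abs_sub s t
      linarith
    have h1 := Real.abs_cos_le_one (a * θ)
    have h2 := Real.cos_le_one θ
    have h3 := Real.neg_one_le_cos θ
    rw [Real.norm_eq_abs, abs_mul, abs_mul, abs_of_pos (Real.exp_pos _)]
    have h4 : Real.exp (-2 * s * (1 - Real.cos θ)) ≤ Real.exp (4 * (|t| + 1)) := by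
      apply Real.exp_le_exp.2
      have : -s ≤ |t| + 1 := (neg_le_abs s).trans hs'
      nlinarith [abs_nonneg t]
    have h5 : |-2 * (1 - Real.cos θ)| ≤ 4 := by
      rw [abs_le]; constructor <;> linarith
    calc _ ≤ 1 * (Real.exp (4 * (|t| + 1)) * 4) := by gcongr
      _ = _ := one_mul _
  · refine Filter.Eventually.of_forall fun θ _ s hs => ?_
    apply HasDerivAt.const_mul
    apply HasDerivAt.exp
    have := ((hasDerivAt_id s).const_mul (-2 : ℝ)).mul_const (1 - Real.cos θ)
    simpa using this

lemma g1_abs_le (t : ℝ) (ht : 0 ≤ t) (a : ℤ) : |g1 t a| ≤ Real.exp 4 / Real.sqrt (1 + t) := by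
  have hpi := Real.pi_pos
  have h1 : |∫ θ in (-Real.pi)..Real.pi, Real.cos (a * θ) * Real.exp (-2 * t * (1 - Real.cos θ))| ≤
      ∫ θ in (-Real.pi)..Real.pi, Real.exp 4 * Real.exp (-(4 / Real.pi ^ 2 * (1 + t)) * θ ^ 2) := by
    rw [← Real.norm_eq_abs]
    refine intervalIntegral.norm_integral_le_of_norm_le (by linarith) ?_ ?_
    · refine Filter.Eventually.of_forall fun θ hθ => ?_
      have hθ' : |θ| ≤ Real.pi := abs_le.2 ⟨hθ.1.le, hθ.2⟩
      have hc := Real.cos_le_one_sub_mul_cos_sq hθ'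
      rw [Real.norm_eq_abs, abs_mul, abs_of_pos (Real.exp_pos _)]
      have h3 := Real.neg_one_le_cos θ
      have h1 := Real.abs_cos_le_one (a * θ)
      calc _ ≤ 1 * Real.exp (-2 * t * (1 - Real.cos θ)) := by gcongr
        _ = Real.exp (-2 * t * (1 - Real.cos θ)) := one_mul _
        _ ≤ Real.exp (4 + -(4 / Real.pi ^ 2 * (1 + t)) * θ ^ 2) := by
            apply Real.exp_le_exp.2
            have : 4 / Real.pi ^ 2 * θ ^ 2 ≤ 2 * (1 - Real.cos θ) := by
              have : 4 / Real.pi ^ 2 * θ ^ 2 = 2 * (2 / Real.pi ^ 2 * θ ^ 2) := by ring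
              linarith
            nlinarith
        _ = _ := Real.exp_add _ _
    · exact Continuous.intervalIntegrable (by fun_prop) _ _
  have hb : 0 < 4 / Real.pi ^ 2 * (1 + t) := by positivity
  have h2 : ∫ θ in (-Real.pi)..Real.pi, Real.exp 4 * Real.exp (-(4 / Real.pi ^ 2 * (1 + t)) * θ ^ 2) ≤
      Real.exp 4 * Real.sqrt (Real.pi / (4 / Real.pi ^ 2 * (1 + t))) := by
    rw [intervalIntegral.integral_const_mul, ← integral_gaussian]
    gcongr
    rw [intervalIntegral.integral_of_le (by linarith)]
    exact MeasureTheory.setIntegral_le_integral (integrable_exp_neg_mul_sq hb)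
      (Filter.Eventually.of_forall fun _ => (Real.exp_pos _).le)
  have h3 : Real.sqrt (Real.pi / (4 / Real.pi ^ 2 * (1 + t))) ≤ 2 * Real.pi / Real.sqrt (1 + t) := by
    rw [Real.sqrt_le_left (by positivity), div_pow, Real.sq_sqrt (by linarith),
      div_le_div_iff₀ (by positivity) (by positivity)]
    have h4 := Real.pi_le_four
    have : (2 * Real.pi) ^ 2 * (4 / Real.pi ^ 2 * (1 + t)) = 16 * (1 + t) := by
      field_simp; ring
    rw [this]; nlinarith
  unfold g1
  rw [abs_mul, abs_of_pos (by positivity)]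
  have hs : 0 < Real.sqrt (1 + t) := Real.sqrt_pos.2 (by linarith)
  calc _ ≤ (2 * Real.pi)⁻¹ * (Real.exp 4 * (2 * Real.pi / Real.sqrt (1 + t))) := by
        gcongr
        exact h1.trans (h2.trans (by gcongr))
    _ = _ := by field_simp

lemma g1_zero (a : ℤ) : g1 0 a = if a = 0 then 1 else 0 := by
  have hpi := Real.pi_pos
  unfold g1
  split_ifs with h
  · subst h
    simp
    field_simp
    ring
  · have ha : (a : ℝ) ≠ 0 := by exact_mod_cast h
    have : ∫ θ in (-Real.pi)..Real.pi, Real.cos (a * θ) * Real.exp (-2 * 0 * (1 - Real.cos θ)) = 0 := by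
      simp only [mul_zero, zero_mul, Real.exp_zero, mul_one]
      rw [intervalIntegral.integral_comp_mul_left (fun x => Real.cos x) ha, integral_cos]
      simp [Real.sin_int_mul_pi]
    rw [this, mul_zero]

lemma g1_nonneg (t : ℝ) (ht : 0 ≤ t) (a : ℤ) : 0 ≤ g1 t a := by
  have hbd : ∀ s, 0 ≤ s → ∀ c, -g1 s c ≤ Real.exp 4 := by
    intro s hs c
    have h := g1_abs_le s hs c
    have h2 : Real.exp 4 / Real.sqrt (1 + s) ≤ Real.exp 4 := by
      apply div_le_self (Real.exp_pos _).le
      rw [Real.one_le_sqrt]; linarith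
    linarith [neg_abs_le (g1 s c)]
  have main : ∀ ε : ℝ, 0 < ε → -g1 t a - ε * ((a : ℝ) ^ 2 + 3 * t) ≤ 0 := by
    intro ε hε
    obtain ⟨N, hN⟩ := exists_nat_ge (max (Real.exp 4 / ε) |(a : ℝ)|)
    have haN : |(a : ℝ)| ≤ N := (le_max_right _ _).trans hN
    have hmemN : ∀ c : ℤ, c ∈ Finset.Icc (-(N : ℤ)) N ↔ |(c : ℝ)| ≤ N := by
      intro c
      rw [Finset.mem_Icc, ← abs_le]
      constructor
      · intro h; exact_mod_cast h
      · intro h; exact_mod_cast h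
    have hout : ∀ c : ℤ, c ∉ Finset.Icc (-(N : ℤ)) N → ∀ s, 0 ≤ s →
        -g1 s c - ε * ((c : ℝ) ^ 2 + 3 * s) ≤ 0 := by
      intro c hc s hs
      have h1 : (N : ℝ) < |(c : ℝ)| := by
        by_contra h; exact hc ((hmemN c).2 (not_lt.1 h))
      have h2 : (1 : ℝ) ≤ |(c : ℝ)| := by
        have : (0 : ℝ) < |(c : ℝ)| := lt_of_le_of_lt (Nat.cast_nonneg N) h1
        have h3 : 0 < |c| := by exact_mod_cast this
        exact_mod_cast h3
      have h3 : Real.exp 4 ≤ ε * |(c : ℝ)| := by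
        rw [← div_le_iff₀' hε]
        exact (le_max_left _ _).trans (hN.trans h1.le)
      have h4 : |(c : ℝ)| ≤ (c : ℝ) ^ 2 := by rw [← sq_abs]; nlinarith
      have h5 := hbd s hs c
      have : ε * |(c : ℝ)| ≤ ε * ((c : ℝ) ^ 2 + 3 * s) := by
        apply mul_le_mul_of_nonneg_left _ hε.le; linarith
      linarith
    refine finite_max (Finset.Icc (-(N : ℤ)) N) (fun s c => -g1 s c - ε * ((c : ℝ) ^ 2 + 3 * s))
      (fun s c => -(g1 s (c + 1) + g1 s (c - 1) - 2 * g1 s c) - ε * 3) 0 t ?_ ?_ ?_ a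
      ((hmemN a).2 haN) t ⟨ht, le_rfl⟩
    · intro c _ s _
      refine (g1_deriv s c).neg.sub ?_
      have : HasDerivAt (fun s : ℝ => (c : ℝ) ^ 2 + 3 * s) 3 s := by
        simpa using ((hasDerivAt_id s).const_mul (3 : ℝ)).const_add ((c : ℝ) ^ 2)
      exact this.const_mul ε
    · intro c _
      show -g1 0 c - ε * ((c : ℝ) ^ 2 + 3 * 0) ≤ 0
      rw [g1_zero]
      have : 0 ≤ ε * ((c : ℝ) ^ 2 + 3 * 0) := by positivity
      split_ifs <;> linarith
    · intro c hc s hs hpos hmax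
      have hall : ∀ e : ℤ, -g1 s e - ε * ((e : ℝ) ^ 2 + 3 * s) ≤ -g1 s c - ε * ((c : ℝ) ^ 2 + 3 * s) := by
        intro e
        by_cases he : e ∈ Finset.Icc (-(N : ℤ)) N
        · exact hmax e he
        · exact (hout e he s hs.1.le).trans hpos.le
      have h1 := hall (c + 1)
      have h2 := hall (c - 1)
      push_cast at h1 h2
      nlinarith
  by_contra hc
  push Not at hc
  have hq : 0 ≤ (a : ℝ) ^ 2 + 3 * t := by positivity
  have := main (-g1 t a / (2 * ((a : ℝ) ^ 2 + 3 * t + 1))) (by apply div_pos <;> linarith)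
  rw [div_mul_eq_mul_div, sub_nonpos, le_div_iff₀ (by linarith)] at this
  nlinarith

/-! ### On-diagonal bound -/

lemma edge_cases {d k : ℕ} (x : Conf d k) (hx : x ∈ SSet d k) (b : Site d × Fin d) :
    (∀ i, b ∉ edgesAt (x i)) ∨ (∃ i, ∀ j, b ∈ edgesAt (x j) ↔ j = i) ∨
    (∃ i j, i ≠ j ∧ (∀ l, b ∈ edgesAt (x l) ↔ l = i ∨ l = j) ∧
      tau b = Equiv.swap (x i) (x j) ∧ sq (x i - x j) = 1) := by
  by_cases h0 : ∀ i, b ∉ edgesAt (x i)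
  · exact Or.inl h0
  right
  push Not at h0
  obtain ⟨i, hi⟩ := h0
  by_cases h1 : ∀ j, b ∈ edgesAt (x j) → j = i
  · left
    exact ⟨i, fun j => ⟨h1 j, fun h => h ▸ hi⟩⟩
  right
  push Not at h1
  obtain ⟨j, hj, hji⟩ := h1
  obtain ⟨ht, hs⟩ := tau_two (x i) (x j) b hi hj (hx i j (Ne.symm hji))
  refine ⟨i, j, Ne.symm hji, fun l => ⟨fun hl => ?_, ?_⟩, ht, hs⟩
  · by_contra hc
    push Not at hc
    have h1 := (tau_two (x i) (x l) b hi hl (hx i l (Ne.symm hc.1))).1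
    have h2 := congrArg (fun e : Equiv.Perm (Site d) => e (x i)) (ht.symm.trans h1)
    simp only [Equiv.swap_apply_left] at h2
    exact hx j l (Ne.symm hc.2) h2
  · rintro (rfl | rfl)
    · exact hi
    · exact hj

lemma prod_edge {d k : ℕ} (U : Site d → ℝ) (hU : ∀ a, 0 ≤ U a) (x : Conf d k) (hx : x ∈ SSet d k)
    (b : Site d × Fin d) : ∏ i, U (act b x i) - ∏ i, U (x i) ≤
      ∑ i, (∏ j ∈ Finset.univ.erase i, U (x j)) * (U (tau b (x i)) - U (x i)) := by
  rcases edge_cases x hx b with h | ⟨i, h⟩ | ⟨i, j, hij, h, ht, _⟩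
  · have : ∀ i, tau b (x i) = x i := fun i => tau_fix _ _ (h i)
    simp [act, this]
  · rw [Finset.sum_eq_single i]
    · rw [← Finset.mul_prod_erase _ (fun l => U (act b x l)) (Finset.mem_univ i),
        ← Finset.mul_prod_erase _ (fun l => U (x l)) (Finset.mem_univ i)]
      have : ∏ l ∈ Finset.univ.erase i, U (act b x l) = ∏ l ∈ Finset.univ.erase i, U (x l) := by
        refine Finset.prod_congr rfl fun l hl => ?_
        have hl' := (Finset.mem_erase.1 hl).1
        rw [act, tau_fix _ _ (fun hb => hl' ((h l).1 hb))]
      rw [this]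
      simp only [act]
      apply le_of_eq; ring
    · intro l _ hl
      rw [tau_fix _ _ (fun hb => hl ((h l).1 hb))]; ring
    · simp
  · have h1 : ∏ l, U (act b x l) = ∏ l, U (x l) := by
      rw [act_swap x hx i j b ht]
      exact Equiv.prod_comp (Equiv.swap i j) (fun l => U (x l))
    rw [h1, sub_self, ← Finset.sum_subset (Finset.subset_univ {i, j})]
    · rw [Finset.sum_pair hij, ht, Equiv.swap_apply_left, Equiv.swap_apply_right]
      have e1 := Finset.mul_prod_erase (Finset.univ.erase i) (fun l => U (x l)) (a := j)
        (Finset.mem_erase.2 ⟨Ne.symm hij, Finset.mem_univ _⟩)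
      have e2 := Finset.mul_prod_erase (Finset.univ.erase j) (fun l => U (x l)) (a := i)
        (Finset.mem_erase.2 ⟨hij, Finset.mem_univ _⟩)
      rw [← e1, ← e2, Finset.erase_right_comm]
      have hQ : 0 ≤ ∏ l ∈ (Finset.univ.erase j).erase i, U (x l) := Finset.prod_nonneg fun _ _ => hU _
      have := mul_nonneg hQ (sq_nonneg (U (x j) - U (x i)))
      linarith
    · intro l _ hl
      simp only [Finset.mem_insert, Finset.mem_singleton] at hl
      rw [tau_fix _ _ (fun hb => hl ((h l).1 hb))]; ring

lemma Lexc_prod {d k : ℕ} (U : Site d → ℝ) (hU : ∀ a, 0 ≤ U a) (x : Conf d k) (hx : x ∈ SSet d k) :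
    Lexc (fun z => ∏ i, U (z i)) x ≤ ∑ i, (∏ j ∈ Finset.univ.erase i, U (x j)) * lap U (x i) := by
  rw [Lexc_eq _ x hx _ subset_rfl]
  refine (Finset.sum_le_sum fun b _ => prod_edge U hU x hx b).trans (le_of_eq ?_)
  rw [Finset.sum_comm]
  refine Finset.sum_congr rfl fun i _ => ?_
  rw [← Finset.mul_sum, sum_tau U (x i) _ (edgesAt_subset x i)]

def gd {d : ℕ} (t : ℝ) (a : Site d) : ℝ := ∏ m, g1 t (a m)

lemma gd_deriv {d : ℕ} (c : Site d) (t : ℝ) (a : Site d) :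
    HasDerivAt (fun t => gd t (a - c)) (lap (fun a => gd t (a - c)) a) t := by
  have h := HasDerivAt.fun_finsetProd (u := Finset.univ) (f := fun m s => g1 s ((a - c) m))
    (f' := fun m => g1 t ((a - c) m + 1) + g1 t ((a - c) m - 1) - 2 * g1 t ((a - c) m)) (x := t)
    (fun m _ => g1_deriv t ((a - c) m))
  unfold gd
  refine h.congr_deriv ?_
  unfold lap
  refine Finset.sum_congr rfl fun m _ => ?_
  have key : ∀ s : ℤ, ∏ l, g1 t ((a + s • ev m - c) l) =
      g1 t ((a - c) m + s) * ∏ l ∈ Finset.univ.erase m, g1 t ((a - c) l) := by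
    intro s
    rw [← Finset.mul_prod_erase _ _ (Finset.mem_univ m)]
    congr 1
    · congr 1
      simp [ev]; ring
    · refine Finset.prod_congr rfl fun l hl => ?_
      have hl' := (Finset.mem_erase.1 hl).1
      simp [ev, hl']
  have k1 := key 1
  have k2 := key (-1)
  have k0 := key 0
  simp only [one_smul, neg_smul, zero_smul, add_zero, ← sub_eq_add_neg] at k1 k2 k0
  show _ = ∏ l, g1 t ((a + ev m - c) l) + ∏ l, g1 t ((a - ev m - c) l) - 2 * ∏ l, g1 t ((a - c) l)
  rw [k1, k2, k0, smul_eq_mul]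
  ring

lemma gd_nonneg {d : ℕ} (t : ℝ) (ht : 0 ≤ t) (a : Site d) : 0 ≤ gd t a :=
  Finset.prod_nonneg fun m _ => g1_nonneg t ht _

lemma gd_le {d : ℕ} (t : ℝ) (ht : 0 ≤ t) (a : Site d) :
    gd t a ≤ (Real.exp 4 / Real.sqrt (1 + t)) ^ d := by
  unfold gd
  refine (Finset.prod_le_prod (fun m _ => g1_nonneg t ht _)
    (fun m _ => (le_abs_self _).trans (g1_abs_le t ht (a m)))).trans ?_
  rw [Finset.prod_const, Finset.card_univ, Fintype.card_fin]

lemma gd_zero {d : ℕ} (a : Site d) : gd 0 (a - a) = 1 := by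
  unfold gd; simp [g1_zero]

def us {d k : ℕ} (y : Conf d k) (t : ℝ) (a : Site d) : ℝ := ∑ l, gd t (a - y l)

lemma us_deriv {d k : ℕ} (y : Conf d k) (t : ℝ) (a : Site d) :
    HasDerivAt (fun t => us y t a) (lap (us y t) a) t := by
  have h := HasDerivAt.fun_sum (u := Finset.univ) (fun l _ => gd_deriv (y l) t a)
  refine h.congr_deriv ?_
  unfold lap us
  rw [Finset.sum_comm]
  refine Finset.sum_congr rfl fun m _ => ?_
  rw [Finset.sum_sub_distrib, Finset.sum_add_distrib, Finset.mul_sum]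

lemma ptl_le_prod {d k : ℕ} (y x : Conf d k) (hx : x ∈ SSet d k) (t : ℝ) (ht : 0 ≤ t) :
    ptl t x y ≤ ∏ i, us y t (x i) := by
  have hus : ∀ s, 0 ≤ s → ∀ a, 0 ≤ us y s a := fun s hs a =>
    Finset.sum_nonneg fun l _ => gd_nonneg s hs _
  have := max_principle (fun t z => ptl t z y - ∏ i, us y t (z i))
    (fun t z => Lexc (fun z => ptl t z y) z -
      ∑ i, (∏ j ∈ Finset.univ.erase i, us y t (z j)) * lap (us y t) (z i)) t
    (Real.exp (t * (4 * k * d))) ?_ ?_ ?_ ?_ x hx t ⟨ht, le_rfl⟩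
  · linarith
  · intro z hz s _
    refine (ptl_deriv y z hz s).sub ?_
    exact HasDerivAt.fun_finsetProd (u := Finset.univ) (fun i _ => us_deriv y s (z i))
  · intro z hz s hs
    have h1 := (abs_le.1 (ptl_bound y z hz s)).2
    rw [abs_of_nonneg hs.1] at h1
    have : Real.exp (s * (4 * k * d)) ≤ Real.exp (t * (4 * k * d)) := by
      apply Real.exp_le_exp.2
      exact mul_le_mul_of_nonneg_right hs.2 (by positivity)
    have h2 : 0 ≤ ∏ i, us y s (z i) := Finset.prod_nonneg fun i _ => hus s hs.1 _
    linarith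
  · intro z hz
    rw [ptl_zero]
    have h2 : 0 ≤ ∏ i, us y 0 (z i) := Finset.prod_nonneg fun i _ => hus 0 le_rfl _
    unfold deltaFn
    split_ifs with h
    · subst h
      have : ∏ i : Fin k, (1 : ℝ) ≤ ∏ i, us z 0 (z i) := by
        refine Finset.prod_le_prod (fun _ _ => zero_le_one) fun i _ => ?_
        rw [← gd_zero (z i)]
        exact Finset.single_le_sum (f := fun l => gd 0 (z i - z l)) (fun l _ => gd_nonneg 0 le_rfl _)
          (Finset.mem_univ i)
      simp at this
      linarith
    · linarith
  · intro z hz s hs _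
    rw [Lexc_sub _ _ z hz]
    have := Lexc_prod (us y s) (hus s hs.1) z hz
    linarith

lemma ptl_diag (d k : ℕ) : ∃ C : ℝ, 0 < C ∧ ∀ y x : Conf d k, x ∈ SSet d k → ∀ t : ℝ, 0 ≤ t →
    ptl t x y ≤ C / Real.sqrt (1 + t) ^ (k * d) := by
  refine ⟨(k + 1) ^ k * Real.exp 4 ^ (k * d), by positivity, fun y x hx t ht => ?_⟩
  refine (ptl_le_prod y x hx t ht).trans ?_
  have hs : 0 < Real.sqrt (1 + t) := Real.sqrt_pos.2 (by linarith)
  have h1 : ∀ a, us y t a ≤ (k + 1) * (Real.exp 4 / Real.sqrt (1 + t)) ^ d := by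
    intro a
    unfold us
    refine (Finset.sum_le_sum fun l _ => gd_le t ht _).trans ?_
    simp
    have : (0:ℝ) ≤ (Real.exp 4 / Real.sqrt (1 + t)) ^ d := by positivity
    nlinarith
  refine (Finset.prod_le_prod (fun i _ => Finset.sum_nonneg fun l _ => gd_nonneg t ht _)
    (fun i _ => h1 (x i))).trans (le_of_eq ?_)
  simp only [Finset.prod_const, Finset.card_univ, Fintype.card_fin]
  rw [mul_pow, ← pow_mul, div_pow, mul_comm d k, mul_div_assoc]

/-! ### Off-diagonal bound -/

lemma inv_pow_bound (n : ℕ) : ∃ C : ℝ, 0 ≤ C ∧ ∀ ε : ℝ, |ε| ≤ 1 / 2 →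
    (1 + ε)⁻¹ ^ n ≤ 1 - n * ε + C * ε ^ 2 := by
  induction n with
  | zero => exact ⟨0, le_rfl, fun ε _ => by simp⟩
  | succ n ih =>
    obtain ⟨C, hC, h⟩ := ih
    refine ⟨2 * C + 2 * n + 2, by positivity, fun ε hε => ?_⟩
    have h1 := h ε hε
    have hε' := abs_le.1 hε
    have hpos : 0 < 1 + ε := by linarith [hε'.1]
    have h2 : (1 + ε)⁻¹ ≤ 1 - ε + 2 * ε ^ 2 := by
      rw [inv_le_iff_one_le_mul₀ hpos]
      nlinarith [sq_nonneg ε, hε'.1]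
    have h3 : 0 ≤ (1 + ε)⁻¹ ^ n := by positivity
    have h4 : 0 ≤ 1 - n * ε + C * ε ^ 2 := h3.trans h1
    have hn : (0 : ℝ) ≤ n := Nat.cast_nonneg n
    calc (1 + ε)⁻¹ ^ (n + 1) = (1 + ε)⁻¹ ^ n * (1 + ε)⁻¹ := pow_succ _ _
      _ ≤ (1 - n * ε + C * ε ^ 2) * (1 - ε + 2 * ε ^ 2) := mul_le_mul h1 h2 (by positivity) h4
      _ = 1 - (n + 1) * ε + ε ^ 2 * (C + n + 2 + (-ε) * (C + 2 * n) + 2 * C * ε ^ 2) := by ring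
      _ ≤ 1 - (n + 1) * ε + ε ^ 2 * (2 * C + 2 * n + 2) := by
          refine add_le_add le_rfl (mul_le_mul_of_nonneg_left ?_ (sq_nonneg _))
          have e1 : (-ε) * (C + 2 * n) ≤ 1 / 2 * (C + 2 * n) :=
            mul_le_mul_of_nonneg_right (by linarith [hε'.1]) (by positivity)
          have e2 : ε ^ 2 ≤ 1 / 4 := by nlinarith [hε'.1, hε'.2]
          nlinarith
      _ = _ := by push_cast; ring

lemma csq_act {d k : ℕ} (x : Conf d k) (hx : x ∈ SSet d k) (b : Site d × Fin d) :
    csq (act b x - x) ≤ 2 := by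
  have h0 : ∀ i, b ∉ edgesAt (x i) → sq ((act b x - x) i) = 0 := by
    intro i hi
    rw [sq_eq_zero]
    simp [act, tau_fix _ _ hi]
  have h1 : ∀ i, b ∈ edgesAt (x i) → sq ((act b x - x) i) = 1 := fun i hi => sq_tau _ _ hi
  rcases edge_cases x hx b with h | ⟨i, h⟩ | ⟨i, j, hij, h, -, _⟩
  · unfold csq
    rw [Finset.sum_eq_zero fun i _ => h0 i (h i)]; norm_num
  · rw [csq_act_one x b i h]; norm_num
  · unfold csq
    rw [← Finset.sum_subset (Finset.subset_univ {i, j}), Finset.sum_pair hij,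
      h1 i ((h i).2 (Or.inl rfl)), h1 j ((h j).2 (Or.inr rfl))]
    · norm_num
    · intro l _ hl
      simp only [Finset.mem_insert, Finset.mem_singleton] at hl
      exact h0 l fun hb => hl ((h l).1 hb)

def cdot {d k : ℕ} (x z : Conf d k) : ℝ := ∑ i, ∑ j, (x i j : ℝ) * z i j

lemma csq_add {d k : ℕ} (x z : Conf d k) : csq (x + z) = csq x + 2 * cdot x z + csq z := by
  unfold csq sq cdot
  rw [Finset.mul_sum, ← Finset.sum_add_distrib, ← Finset.sum_add_distrib]
  refine Finset.sum_congr rfl fun i _ => ?_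
  rw [Finset.mul_sum, ← Finset.sum_add_distrib, ← Finset.sum_add_distrib]
  refine Finset.sum_congr rfl fun j _ => ?_
  simp; ring

lemma cdot_sq {d k : ℕ} (x z : Conf d k) : cdot x z ^ 2 ≤ csq x * csq z := by
  unfold csq sq cdot
  simp only [← Finset.sum_product']
  exact Finset.sum_mul_sq_le_sq_mul_sq _ (fun p : Fin k × Fin d => (x p.1 p.2 : ℝ)) (fun p => (z p.1 p.2 : ℝ))

lemma csq_diff {d k : ℕ} (c x : Conf d k) (hx : x ∈ SSet d k) (b : Site d × Fin d) :
    (csq (act b x - c) - csq (x - c)) ^ 2 ≤ 16 * csq (x - c) + 8 := by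
  have e : act b x - c = (x - c) + (act b x - x) := by abel
  rw [e, csq_add]
  have h1 := cdot_sq (x - c) (act b x - x)
  have h2 := csq_act x hx b
  have h3 := csq_nonneg (act b x - x)
  have h4 := csq_nonneg (x - c)
  set D := cdot (x - c) (act b x - x)
  set q := csq (act b x - x)
  set s := csq (x - c)
  have h5 : s * q ≤ s * 2 := mul_le_mul_of_nonneg_left h2 h4
  nlinarith [sq_nonneg (2 * D - q)]

lemma V_sub (d k : ℕ) : ∃ C : ℝ, 0 ≤ C ∧ ∀ c x : Conf d k, x ∈ SSet d k →
    Lexc (fun z => (64 + csq (z - c))⁻¹ ^ (k * d)) x ≤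
      C * (k * d) * (64 + csq (x - c))⁻¹ * (64 + csq (x - c))⁻¹ ^ (k * d) := by
  obtain ⟨C, hC, h⟩ := inv_pow_bound (k * d)
  refine ⟨32 * C, by positivity, fun c x hx => ?_⟩
  set s := csq (x - c) with hs
  have hs0 : 0 ≤ s := csq_nonneg _
  set V := (64 + s)⁻¹ ^ (k * d) with hV
  have hV0 : 0 ≤ V := by positivity
  rw [Lexc_eq _ x hx _ subset_rfl]
  have hsum : ∑ b ∈ edgesOf x, (csq (act b x - c) - s) = 2 * k * d := by
    rw [← Lexc_csq c x hx, Lexc_eq _ x hx _ subset_rfl]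
  have key : ∀ b ∈ edgesOf x, (64 + csq (act b x - c))⁻¹ ^ (k * d) - V ≤
      V * (-((k * d : ℕ) : ℝ) * (64 + s)⁻¹ * (csq (act b x - c) - s) + C * (16 * (64 + s)⁻¹)) := by
    intro b _
    set Δ := csq (act b x - c) - s with hΔ
    have h1 : Δ ^ 2 ≤ 16 * s + 8 := csq_diff c x hx b
    have hε : |Δ * (64 + s)⁻¹| ≤ 1 / 2 := by
      rw [abs_mul, abs_of_pos (by positivity : 0 < (64 + s)⁻¹), ← div_eq_mul_inv,
        div_le_iff₀ (by positivity)]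
      apply abs_le_of_sq_le_sq _ (by positivity)
      nlinarith
    have h2 := h _ hε
    have e1 : (64 + csq (act b x - c))⁻¹ ^ (k * d) = V * (1 + Δ * (64 + s)⁻¹)⁻¹ ^ (k * d) := by
      rw [hV, ← mul_pow, ← mul_inv]
      congr 2
      have : (64 + s) ≠ 0 := by positivity
      field_simp
      rw [hΔ]; ring
    rw [e1]
    have h3 : (Δ * (64 + s)⁻¹) ^ 2 ≤ 16 * (64 + s)⁻¹ := by
      rw [← div_eq_mul_inv, ← div_eq_mul_inv, div_pow, div_le_div_iff₀ (by positivity) (by positivity)]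
      have : Δ ^ 2 * (64 + s) ≤ (16 * (64 + s)) * (64 + s) :=
        mul_le_mul_of_nonneg_right (by linarith) (by positivity)
      linarith
    have h4 : (1 + Δ * (64 + s)⁻¹)⁻¹ ^ (k * d) ≤ 1 - ((k * d : ℕ) : ℝ) * (Δ * (64 + s)⁻¹) + C * (16 * (64 + s)⁻¹) :=
      h2.trans (by gcongr)
    have := mul_le_mul_of_nonneg_left h4 hV0
    linarith
  refine (Finset.sum_le_sum key).trans ?_
  rw [← Finset.mul_sum, Finset.sum_add_distrib, ← Finset.mul_sum, hsum, Finset.sum_const, nsmul_eq_mul]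
  have hcard := card_edgesOf x
  have hi : 0 ≤ (64 + s)⁻¹ := by positivity
  have h5 : ((edgesOf x).card : ℝ) * (C * (16 * (64 + s)⁻¹)) ≤ (2 * k * d) * (C * (16 * (64 + s)⁻¹)) :=
    mul_le_mul_of_nonneg_right hcard (by positivity)
  have h6 : 0 ≤ ((k * d : ℕ) : ℝ) * (64 + s)⁻¹ * (2 * k * d) := by positivity
  have h7 : -((k * d : ℕ) : ℝ) * (64 + s)⁻¹ * (2 * k * d) + ((edgesOf x).card : ℝ) * (C * (16 * (64 + s)⁻¹))
      ≤ (2 * k * d) * (C * (16 * (64 + s)⁻¹)) := by linarith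
  refine (mul_le_mul_of_nonneg_left h7 hV0).trans (le_of_eq ?_)
  ring

lemma sqrt_pow_deriv (n : ℕ) (t : ℝ) (ht : 0 ≤ t) :
    HasDerivAt (fun t => Real.sqrt (1 + t) ^ n) (n / (2 * (1 + t)) * Real.sqrt (1 + t) ^ n) t := by
  have h0 : 0 < 1 + t := by linarith
  have h1 : HasDerivAt (fun t : ℝ => Real.sqrt (1 + t)) (1 / (2 * Real.sqrt (1 + t))) t :=
    ((hasDerivAt_id t).const_add 1).sqrt h0.ne'
  have h2 := h1.fun_pow n
  refine h2.congr_deriv ?_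
  have hs : 0 < Real.sqrt (1 + t) := Real.sqrt_pos.2 h0
  have hss : Real.sqrt (1 + t) ^ 2 = 1 + t := Real.sq_sqrt h0.le
  cases n with
  | zero => simp
  | succ n =>
    rw [Nat.add_sub_cancel, ← hss]
    rw [Real.sqrt_sq hs.le]
    field_simp
    ring

lemma ptl_off1 (d k : ℕ) : ∃ A : ℝ, 0 < A ∧ ∀ y x : Conf d k, x ∈ SSet d k → ∀ t : ℝ, 0 ≤ t →
    ptl t x y ≤ A * (Real.sqrt (1 + t) ^ (k * d) * (64 + csq (x - y))⁻¹ ^ (k * d)) := by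
  obtain ⟨C0, hC0, hdiag⟩ := ptl_diag d k
  obtain ⟨C, hC, hV⟩ := V_sub d k
  set K := 2 * C + 1 with hK
  have hK0 : 0 < K := by positivity
  set A := C0 * K ^ (k * d) + 64 ^ (k * d) with hA
  have hA0 : 0 < A := by positivity
  refine ⟨A, hA0, fun y x hx t ht => ?_⟩
  have := max_principle (fun t z => ptl t z y - A * (Real.sqrt (1 + t) ^ (k * d) * (64 + csq (z - y))⁻¹ ^ (k * d)))
    (fun t z => Lexc (fun z => ptl t z y) z - A * (((k * d : ℕ) : ℝ) / (2 * (1 + t)) * Real.sqrt (1 + t) ^ (k * d)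
      * (64 + csq (z - y))⁻¹ ^ (k * d))) t
    (Real.exp (t * (4 * k * d))) ?_ ?_ ?_ ?_ x hx t ⟨ht, le_rfl⟩
  · linarith
  · intro z hz s hs
    refine (ptl_deriv y z hz s).sub ?_
    exact ((sqrt_pow_deriv (k * d) s hs.1).mul_const _).const_mul _
  · intro z hz s hs
    have h1 := (abs_le.1 (ptl_bound y z hz s)).2
    rw [abs_of_nonneg hs.1] at h1
    have : Real.exp (s * (4 * k * d)) ≤ Real.exp (t * (4 * k * d)) := by
      apply Real.exp_le_exp.2
      exact mul_le_mul_of_nonneg_right hs.2 (by positivity)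
    have h3 := csq_nonneg (z - y)
    have h2 : 0 ≤ A * (Real.sqrt (1 + s) ^ (k * d) * (64 + csq (z - y))⁻¹ ^ (k * d)) := by positivity
    linarith
  · intro z hz
    rw [ptl_zero]
    have h3 := csq_nonneg (z - y)
    have h2 : 0 ≤ A * (Real.sqrt (1 + 0) ^ (k * d) * (64 + csq (z - y))⁻¹ ^ (k * d)) := by positivity
    unfold deltaFn
    split_ifs with h
    · subst h
      have e : csq (z - z) = 0 := by simp [csq, sq]
      rw [e]
      simp only [add_zero, Real.sqrt_one, one_pow, one_mul, hA]
      rw [inv_pow, add_mul, mul_inv_cancel₀ (by positivity)]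
      have : 0 ≤ C0 * K ^ (k * d) * ((64 : ℝ) ^ (k * d))⁻¹ := by positivity
      linarith
    · linarith
  · intro z hz s hs hpos
    have h3 := csq_nonneg (z - y)
    have h1s : 0 < 1 + s := by linarith [hs.1]
    have hsq : 0 < Real.sqrt (1 + s) := Real.sqrt_pos.2 h1s
    have hss : Real.sqrt (1 + s) ^ 2 = 1 + s := Real.sq_sqrt h1s.le
    rw [Lexc_sub _ _ z hz, Lexc_mul _ _ z hz, Lexc_mul _ _ z hz]
    have hlarge : K * (1 + s) ≤ 64 + csq (z - y) := by
      by_contra hc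
      push Not at hc
      have h4 := hdiag y z hz s hs.1
      have h5 : C0 / Real.sqrt (1 + s) ^ (k * d) ≤
          A * (Real.sqrt (1 + s) ^ (k * d) * (64 + csq (z - y))⁻¹ ^ (k * d)) := by
        have e1 : (Real.sqrt (1 + s))⁻¹ ≤ K * (Real.sqrt (1 + s) * (64 + csq (z - y))⁻¹) := by
          rw [← mul_assoc, ← div_eq_mul_inv, le_div_iff₀ (by positivity), inv_mul_le_iff₀ hsq]
          nlinarith
        have e2 := pow_le_pow_left₀ (by positivity) e1 (k * d)
        have e3 := mul_le_mul_of_nonneg_left e2 hC0.le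
        have e4 : 0 ≤ (64 : ℝ) ^ (k * d) * (Real.sqrt (1 + s) ^ (k * d) * (64 + csq (z - y))⁻¹ ^ (k * d)) := by
          positivity
        rw [hA, add_mul, div_eq_mul_inv, ← inv_pow]
        rw [mul_pow, mul_pow] at e3
        linarith
      linarith
    have h4 := hV y z hz
    have h5 : C * (k * d) * (64 + csq (z - y))⁻¹ ≤ ((k * d : ℕ) : ℝ) / (2 * (1 + s)) := by
      rw [← div_eq_mul_inv, div_le_div_iff₀ (by positivity) (by positivity)]
      push_cast
      have : (C * (2 * (1 + s))) * ((k : ℝ) * d) ≤ (64 + csq (z - y)) * ((k : ℝ) * d) := by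
        apply mul_le_mul_of_nonneg_right _ (by positivity)
        nlinarith
      linarith
    have h6 : Lexc (fun z => (64 + csq (z - y))⁻¹ ^ (k * d)) z ≤
        ((k * d : ℕ) : ℝ) / (2 * (1 + s)) * (64 + csq (z - y))⁻¹ ^ (k * d) :=
      h4.trans (mul_le_mul_of_nonneg_right h5 (by positivity))
    have h7 := mul_le_mul_of_nonneg_left h6 (show 0 ≤ A * Real.sqrt (1 + s) ^ (k * d) by positivity)
    linarith

lemma ptl_off (d k : ℕ) : ∃ C : ℝ, 0 < C ∧ ∀ y x : Conf d k, x ∈ SSet d k → ∀ t : ℝ, 0 ≤ t →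
    ptl t x y ≤ C / Real.sqrt (1 + t + csq (x - y)) ^ (k * d) := by
  obtain ⟨C0, hC0, hdiag⟩ := ptl_diag d k
  obtain ⟨A, hA0, hoff⟩ := ptl_off1 d k
  refine ⟨(C0 + A) * 2 ^ (k * d), by positivity, fun y x hx t ht => ?_⟩
  have hs0 := csq_nonneg (x - y)
  set s := csq (x - y) with hs
  set a := Real.sqrt (1 + t) with ha
  set q := Real.sqrt (1 + t + s) with hq
  have ha0 : 0 < a := Real.sqrt_pos.2 (by linarith)
  have hq0 : 0 < q := Real.sqrt_pos.2 (by linarith)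
  have ha2 : a ^ 2 = 1 + t := Real.sq_sqrt (by linarith)
  have hq2 : q ^ 2 = 1 + t + s := Real.sq_sqrt (by linarith)
  have hp : 0 ≤ (2 / q) ^ (k * d) := by positivity
  have e0 : (C0 + A) * 2 ^ (k * d) / q ^ (k * d) = (C0 + A) * (2 / q) ^ (k * d) := by
    rw [div_pow, mul_div_assoc]
  rw [e0]
  by_cases h : s ≤ 1 + t
  · refine (hdiag y x hx t ht).trans ?_
    have h1 : 1 / a ≤ 2 / q := by
      rw [div_le_div_iff₀ ha0 hq0]
      have : q ≤ 2 * a := by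
        apply le_of_sq_le_sq _ (by positivity)
        nlinarith
      linarith
    have h2 := pow_le_pow_left₀ (by positivity) h1 (k * d)
    rw [div_pow, one_pow] at h2
    rw [div_eq_mul_one_div]
    nlinarith
  · push Not at h
    refine (hoff y x hx t ht).trans ?_
    rw [← mul_pow]
    have h1 : a * (64 + s)⁻¹ ≤ 2 / q := by
      rw [← div_eq_mul_inv, div_le_div_iff₀ (by positivity) hq0]
      have : a ≤ q := Real.sqrt_le_sqrt (by linarith)
      nlinarith
    have h2 := pow_le_pow_left₀ (by positivity) h1 (k * d)
    nlinarith

/-! ### The logarithmic pair function -/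

def G {d : ℕ} (z : Site d) : ℝ := Real.log (1 + sq z)

lemma prod_one_sub {ι : Type*} (s : Finset ι) (a : ι → ℝ) (h0 : ∀ i ∈ s, 0 ≤ a i) (h1 : ∀ i ∈ s, a i ≤ 1) :
    1 - ∑ i ∈ s, a i ≤ ∏ i ∈ s, (1 - a i) ∧ ∏ i ∈ s, (1 - a i) ≤ 1 := by
  induction s using Finset.induction_on with
  | empty => simp
  | insert i s hi ih =>
    rw [Finset.sum_insert hi, Finset.prod_insert hi]
    obtain ⟨ih1, ih2⟩ := ih (fun j hj => h0 j (Finset.mem_insert_of_mem hj))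
      (fun j hj => h1 j (Finset.mem_insert_of_mem hj))
    have hp : 0 ≤ ∏ j ∈ s, (1 - a j) :=
      Finset.prod_nonneg fun j hj => by linarith [h1 j (Finset.mem_insert_of_mem hj)]
    have h2 := h0 i (Finset.mem_insert_self _ _)
    have h3 := h1 i (Finset.mem_insert_self _ _)
    constructor <;> nlinarith

lemma sq_add_ev {d : ℕ} (z : Site d) (m : Fin d) : sq (z + ev m) = sq z + 2 * z m + 1 := by
  unfold sq
  rw [← Finset.add_sum_erase _ _ (Finset.mem_univ m), ← Finset.add_sum_erase (Finset.univ) (fun j => ((z j : ℝ)) ^ 2) (Finset.mem_univ m)]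
  have : ∑ j ∈ Finset.univ.erase m, (((z + ev m) j : ℤ) : ℝ) ^ 2 = ∑ j ∈ Finset.univ.erase m, ((z j : ℤ) : ℝ) ^ 2 := by
    refine Finset.sum_congr rfl fun j hj => ?_
    simp [ev, (Finset.mem_erase.1 hj).1]
  rw [this]
  simp [ev]; ring

lemma sq_sub_ev {d : ℕ} (z : Site d) (m : Fin d) : sq (z - ev m) = sq z - 2 * z m + 1 := by
  have h := sq_add_ev (-z) m
  rw [show -z + ev m = -(z - ev m) by abel, sq_neg, sq_neg] at h
  rw [h]; simp; ring

lemma lap_G {d : ℕ} (hd : 2 ≤ d) (z : Site d) : 0 ≤ lap G z := by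
  set A := 1 + sq z with hA
  have hs := sq_nonneg' z
  have hA1 : 1 ≤ A := by linarith
  have hz : ∀ m, ((z m : ℝ)) ^ 2 ≤ sq z := fun m =>
    Finset.single_le_sum (f := fun j => ((z j : ℝ)) ^ 2) (fun _ _ => sq_nonneg _) (Finset.mem_univ m)
  have e : ∀ m, G (z + ev m) + G (z - ev m) - 2 * G z = Real.log (((A + 1) ^ 2 - 4 * (z m : ℝ) ^ 2)) - 2 * Real.log A := by
    intro m
    unfold G
    rw [sq_add_ev, sq_sub_ev, ← hA, ← Real.log_mul]
    · congr 2; rw [hA]; ring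
    · have := hz m; nlinarith [sq_nonneg ((z m : ℝ) + 1)]
    · have := hz m; nlinarith [sq_nonneg ((z m : ℝ) - 1)]
  unfold lap
  rw [Finset.sum_congr rfl fun m _ => e m, Finset.sum_sub_distrib, Finset.sum_const, Finset.card_univ,
    Fintype.card_fin, nsmul_eq_mul, sub_nonneg]
  have hpos : ∀ m, 0 < (A + 1) ^ 2 - 4 * (z m : ℝ) ^ 2 := by
    intro m
    have := hz m
    nlinarith
  rw [← Real.log_prod (fun m _ => (hpos m).ne')]
  have e2 : (d : ℝ) * (2 * Real.log A) = Real.log (A ^ (2 * d)) := by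
    rw [Real.log_pow]; push_cast; ring
  rw [e2]
  apply Real.log_le_log (by positivity)
  have hB : 0 < A + 1 := by linarith
  have hB2 : 0 < (A + 1) ^ 2 := by positivity
  have h1 := (prod_one_sub Finset.univ (fun m : Fin d => 4 * (z m : ℝ) ^ 2 / (A + 1) ^ 2)
    (fun m _ => by positivity) (fun m _ => by
      rw [div_le_one hB2]; linarith [hpos m])).1
  have h2 : ∏ m, ((A + 1) ^ 2 - 4 * (z m : ℝ) ^ 2) = (A + 1) ^ (2 * d) * ∏ m, (1 - 4 * (z m : ℝ) ^ 2 / (A + 1) ^ 2) := by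
    have : ∀ m ∈ (Finset.univ : Finset (Fin d)), (A + 1) ^ 2 - 4 * (z m : ℝ) ^ 2 = (A + 1) ^ 2 * (1 - 4 * (z m : ℝ) ^ 2 / (A + 1) ^ 2) := by
      intro m _; field_simp
    rw [Finset.prod_congr rfl this, Finset.prod_mul_distrib, Finset.prod_const, Finset.card_univ, Fintype.card_fin, pow_mul]
  have h3 : ∑ m, 4 * (z m : ℝ) ^ 2 / (A + 1) ^ 2 = 4 * (A - 1) / (A + 1) ^ 2 := by
    rw [← Finset.sum_div, ← Finset.mul_sum]
    congr 2; rw [hA]; unfold sq; ring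
  rw [h3] at h1
  have h4 : (A / (A + 1)) ^ 4 ≤ 1 - 4 * (A - 1) / (A + 1) ^ 2 := by
    rw [div_pow, div_le_iff₀ (by positivity)]
    have : (1 - 4 * (A - 1) / (A + 1) ^ 2) * (A + 1) ^ 4 = (A + 1) ^ 4 - 4 * (A - 1) * (A + 1) ^ 2 := by
      field_simp
    rw [this]
    nlinarith [sq_nonneg A]
  have h5 : (A / (A + 1)) ^ (2 * d) ≤ (A / (A + 1)) ^ 4 := by
    apply pow_le_pow_of_le_one (by positivity)
    · rw [div_le_one hB]; linarith
    · omega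
  rw [h2]
  calc A ^ (2 * d) = (A + 1) ^ (2 * d) * (A / (A + 1)) ^ (2 * d) := by
        rw [← mul_pow]; congr 1; field_simp
    _ ≤ _ := mul_le_mul_of_nonneg_left (h5.trans (h4.trans h1)) (by positivity)

lemma pair_edge {d : ℕ} (p q : Site d) (hpq : p ≠ q) (b : Site d × Fin d) :
    (G (tau b p - q) - G (p - q)) + (G (tau b q - p) - G (q - p)) +
      (if b ∈ edgesAt p ∧ b ∈ edgesAt q then 2 * Real.log 2 else 0) ≤ G (tau b p - tau b q) - G (p - q) := by
  have hsym : ∀ a c : Site d, G (a - c) = G (c - a) := by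
    intro a c; unfold G; rw [← neg_sub, sq_neg]
  by_cases hp : b ∈ edgesAt p
  · by_cases hq : b ∈ edgesAt q
    · obtain ⟨ht, hs⟩ := tau_two p q b hp hq hpq
      rw [if_pos ⟨hp, hq⟩, ht, Equiv.swap_apply_left, Equiv.swap_apply_right, hsym q p]
      have h0 : ∀ a : Site d, G (a - a) = 0 := by intro a; simp [G, sq_zero]
      rw [h0, h0]
      have : G (p - q) = Real.log 2 := by unfold G; rw [hs]; norm_num
      rw [this]; linarith
    · rw [if_neg (fun h => hq h.2), tau_fix q b hq]; linarith
  · rw [if_neg (fun h => hp h.1), tau_fix p b hp, hsym (tau b q) p, hsym q p]; linarith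

lemma Lexc_pair {d k : ℕ} (hd : 2 ≤ d) (x : Conf d k) (hx : x ∈ SSet d k) (i j : Fin k) (hij : i ≠ j) :
    0 ≤ Lexc (fun z => G (z i - z j)) x ∧
    (sq (x i - x j) = 1 → 2 * Real.log 2 ≤ Lexc (fun z => G (z i - z j)) x) := by
  rw [Lexc_eq _ x hx _ subset_rfl]
  have h1 := Finset.sum_le_sum fun b (_ : b ∈ edgesOf x) => pair_edge (x i) (x j) (hx i j hij) b
  rw [Finset.sum_add_distrib, Finset.sum_add_distrib,
    sum_tau (fun a => G (a - x j)) (x i) _ (edgesAt_subset x i),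
    sum_tau (fun a => G (a - x i)) (x j) _ (edgesAt_subset x j)] at h1
  have hl : ∀ a c : Site d, 0 ≤ lap (fun a => G (a - c)) a := by
    intro a c
    have h := lap_G hd (a - c)
    unfold lap at h ⊢
    simpa only [add_sub_right_comm, sub_right_comm] using h
  have h2 := hl (x i) (x j)
  have h3 := hl (x j) (x i)
  have hlog : 0 < Real.log 2 := Real.log_pos (by norm_num)
  have h4 : ∀ b ∈ edgesOf x, 0 ≤ (if b ∈ edgesAt (x i) ∧ b ∈ edgesAt (x j) then 2 * Real.log 2 else 0) := by
    intro b _; split_ifs <;> linarith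
  have h5 := Finset.sum_nonneg h4
  have h6 : ∑ b ∈ edgesOf x, (G (tau b (x i) - tau b (x j)) - G (x i - x j)) = 
    ∑ b ∈ edgesOf x, (G (act b x i - act b x j) - G (x i - x j)) := rfl
  refine ⟨by linarith, fun hs => ?_⟩
  obtain ⟨b, hb1, hb2, _⟩ := exists_edge (x j) (x i) hs
  have h7 := Finset.single_le_sum h4 (edgesAt_subset x i hb2)
  rw [if_pos ⟨hb2, hb1⟩] at h7
  linarith

/-! ### Coupling lemmas -/

def phi (c R : ℝ) (z : ℤ) : ℝ := c * (8 * R * |(z : ℝ)| - (z : ℝ) ^ 2)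

def psi {d : ℕ} (c R : ℝ) (a : Site d) : ℝ := ∑ m, phi c R (a m)

def Psi {d k : ℕ} (c R : ℝ) (z : Conf d k) : ℝ := ∑ i, psi c R (z i)

lemma phi_neg (c R : ℝ) (z : ℤ) : phi c R (-z) = phi c R z := by simp [phi]

lemma psi_neg {d : ℕ} (c R : ℝ) (z : Site d) : psi c R (-z) = psi c R z := by
  simp [psi, phi_neg]

lemma phi_lap (c R : ℝ) (z : ℤ) : phi c R (z + 1) + phi c R (z - 1) - 2 * phi c R z =
    if z = 0 then 16 * c * R - 2 * c else -2 * c := by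
  unfold phi
  push_cast
  split_ifs with h
  · subst h; simp; ring
  · rcases lt_or_gt_of_ne h with h | h
    · have h' : (z : ℝ) ≤ -1 := by exact_mod_cast (show z ≤ -1 by omega)
      rw [abs_of_nonpos (by linarith), abs_of_nonpos (by linarith), abs_of_nonpos (by linarith)]; ring
    · have h' : (1 : ℝ) ≤ z := by exact_mod_cast (show 1 ≤ z by omega)
      rw [abs_of_nonneg (by linarith), abs_of_nonneg (by linarith), abs_of_nonneg (by linarith)]; ring

lemma lap_psi {d : ℕ} (c R : ℝ) (p q : Site d) : lap (fun a => psi c R (a - q)) p =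
    ∑ m, if p m = q m then 16 * c * R - 2 * c else -2 * c := by
  have := lap_sum (fun m v => phi c R (v - q m)) p
  unfold psi
  simp only [Pi.sub_apply]
  rw [this]
  refine Finset.sum_congr rfl fun m _ => ?_
  have h := phi_lap c R (p m - q m)
  rw [show p m - q m + 1 = p m + 1 - q m by ring, show p m - q m - 1 = p m - 1 - q m by ring] at h
  rw [h]
  simp only [sub_eq_zero]

lemma lap_psi' {d : ℕ} (c R : ℝ) (p q : Site d) : lap (fun a => psi c R (p - a)) q =
    ∑ m, if p m = q m then 16 * c * R - 2 * c else -2 * c := by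
  have : (fun a => psi c R (p - a)) = fun a => psi c R (a - p) := by
    funext a; rw [← psi_neg, neg_sub]
  rw [this, lap_psi]
  simp only [eq_comm]

def LocMax {d k : ℕ} (c R : ℝ) (P P' : Conf d k → ℝ) (x x' : Conf d k) : Prop :=
  ∀ z z' : Conf d k, z ∈ SSet d k → z' ∈ SSet d k → csq (z - x) ≤ 2 → csq (z' - x') ≤ 2 →
    P z - P' z' - Psi c R (z - z') ≤ P x - P' x' - Psi c R (x - x')

lemma csq_self {d k : ℕ} (x : Conf d k) : csq (x - x) ≤ 2 := by simp [csq, sq]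

lemma couple_indep {d k : ℕ} (c R : ℝ) (hc : 0 ≤ c) (hR : 0 ≤ R) (P P' : Conf d k → ℝ) (x x' : Conf d k)
    (hx : x ∈ SSet d k) (hx' : x' ∈ SSet d k) (h : LocMax c R P P' x x') :
    Lexc P x - Lexc P' x' ≤ 32 * (k * d) * (c * R) := by
  have hcR : 0 ≤ c * R := mul_nonneg hc hR
  have hle : ∀ p q : Site d, (∑ m : Fin d, if p m = q m then 16 * c * R - 2 * c else -2 * c) ≤ 16 * d * (c * R) := by
    intro p q
    have : ∀ m ∈ (Finset.univ : Finset (Fin d)), (if p m = q m then 16 * c * R - 2 * c else -2 * c) ≤ 16 * (c * R) := by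
      intro m _; split_ifs <;> nlinarith
    refine (Finset.sum_le_sum this).trans (le_of_eq ?_)
    simp; ring
  have h1 : Lexc P x ≤ Lexc (fun z => Psi c R (z - x')) x := by
    rw [Lexc_eq _ x hx _ subset_rfl, Lexc_eq _ x hx _ subset_rfl]
    refine Finset.sum_le_sum fun b _ => ?_
    have := h (act b x) x' (act_mem b x hx) hx' (csq_act x hx b) (csq_self x')
    linarith
  have h2 : -Lexc P' x' ≤ Lexc (fun z => Psi c R (x - z)) x' := by
    rw [Lexc_eq _ x' hx' _ subset_rfl, Lexc_eq _ x' hx' _ subset_rfl, ← Finset.sum_neg_distrib]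
    refine Finset.sum_le_sum fun b _ => ?_
    have := h x (act b x') hx (act_mem b x' hx') (csq_self x) (csq_act x' hx' b)
    linarith
  have h3 : Lexc (fun z => Psi c R (z - x')) x ≤ k * (16 * d * (c * R)) := by
    have := Lexc_additive (fun i a => psi c R (a - x' i)) x hx
    unfold Psi
    simp only [Pi.sub_apply]
    rw [this]
    simp only [lap_psi]
    refine (Finset.sum_le_sum fun i _ => hle _ _).trans (le_of_eq ?_)
    simp
  have h4 : Lexc (fun z => Psi c R (x - z)) x' ≤ k * (16 * d * (c * R)) := by
    have := Lexc_additive (fun i a => psi c R (x i - a)) x' hx'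
    unfold Psi
    simp only [Pi.sub_apply]
    rw [this]
    simp only [lap_psi']
    refine (Finset.sum_le_sum fun i _ => hle _ _).trans (le_of_eq ?_)
    simp
  linarith

/-- good configurations: no two adjacent particles -/
def Good {d k : ℕ} (x : Conf d k) : Prop := ∀ i j, i ≠ j → sq (x i - x j) ≠ 1

lemma Lexc_good {d k : ℕ} (f : Conf d k → ℝ) (x : Conf d k) (hx : x ∈ SSet d k) (hg : Good x) :
    Lexc f x = ∑ i, ∑ m, (f (Function.update x i (x i + ev m)) + f (Function.update x i (x i - ev m)) - 2 * f x) := by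
  have key : ∀ b ∈ edgesOf x, f (act b x) - f x = ∑ i, (f (Function.update x i (tau b (x i))) - f x) := by
    intro b _
    rcases edge_cases x hx b with h | ⟨i, h⟩ | ⟨i, j, hij, h, ht, hs⟩
    · have h1 : act b x = x := by funext i; exact tau_fix _ _ (h i)
      rw [h1, Finset.sum_eq_zero]
      · ring
      · intro i _
        rw [tau_fix _ _ (h i), Function.update_eq_self]; ring
    · rw [Finset.sum_eq_single i]
      · congr 2
        funext l
        by_cases hl : l = i
        · subst hl; simp [act]
        · rw [Function.update_of_ne hl]
          exact tau_fix _ _ (fun hb => hl ((h l).1 hb))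
      · intro l _ hl
        rw [tau_fix _ _ (fun hb => hl ((h l).1 hb)), Function.update_eq_self]; ring
      · simp
    · exact absurd hs (hg i j hij)
  rw [Lexc_eq _ x hx _ subset_rfl, Finset.sum_congr rfl key, Finset.sum_comm]
  refine Finset.sum_congr rfl fun i _ => ?_
  have := sum_tau (fun a => f (Function.update x i a)) (x i) _ (edgesAt_subset x i)
  simp only [Function.update_eq_self] at this
  rw [this]
  unfold lap
  simp only [Function.update_eq_self]

lemma Psi_update {d k : ℕ} (c R : ℝ) (z : Conf d k) (i : Fin k) (a : Site d) :
    Psi c R (Function.update z i a) = Psi c R z + psi c R a - psi c R (z i) := by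
  unfold Psi
  rw [← Finset.add_sum_erase _ _ (Finset.mem_univ i),
    ← Finset.add_sum_erase Finset.univ (fun i => psi c R (z i)) (Finset.mem_univ i)]
  have : ∑ l ∈ Finset.univ.erase i, psi c R (Function.update z i a l) = ∑ l ∈ Finset.univ.erase i, psi c R (z l) := by
    refine Finset.sum_congr rfl fun l hl => ?_
    rw [Function.update_of_ne (Finset.mem_erase.1 hl).1]
  rw [this, Function.update_self]; ring

lemma update_sub_left {d k : ℕ} (x x' : Conf d k) (i : Fin k) (a : Site d) :
    Function.update x i a - x' = Function.update (x - x') i (a - x' i) := by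
  funext l
  by_cases hl : l = i
  · subst hl; simp
  · simp [hl]

lemma update_sub_right {d k : ℕ} (x x' : Conf d k) (i : Fin k) (a : Site d) :
    x - Function.update x' i a = Function.update (x - x') i (x i - a) := by
  funext l
  by_cases hl : l = i
  · subst hl; simp
  · simp [hl]

lemma update_sub_both {d k : ℕ} (x x' : Conf d k) (i : Fin k) (a a' : Site d) :
    Function.update x i a - Function.update x' i a' = Function.update (x - x') i (a - a') := by
  funext l
  by_cases hl : l = i
  · subst hl; simp
  · simp [hl]

lemma csq_update {d k : ℕ} (x : Conf d k) (i : Fin k) (a : Site d) :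
    csq (Function.update x i a - x) = sq (a - x i) := by
  rw [update_sub_left, sub_self]
  unfold csq
  rw [Finset.sum_eq_single i]
  · simp
  · intro l _ hl; simp [hl, sq]
  · simp

lemma good_update {d k : ℕ} (x : Conf d k) (hx : x ∈ SSet d k) (hg : Good x) (i : Fin k) (a : Site d)
    (ha : sq (a - x i) = 1) :
    Function.update x i a ∈ SSet d k := by
  have key : ∀ l, l ≠ i → a ≠ x l := by
    intro l hl h
    exact hg l i hl (h ▸ ha)
  intro l l' hll
  by_cases h1 : l = i
  · subst h1
    rw [Function.update_self, Function.update_of_ne (Ne.symm hll)]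
    exact key l' (Ne.symm hll)
  · by_cases h2 : l' = i
    · subst h2
      rw [Function.update_self, Function.update_of_ne hll]
      exact (key l hll).symm
    · rw [Function.update_of_ne h1, Function.update_of_ne h2]
      exact hx l l' hll

lemma psi_add_ev {d : ℕ} (c R : ℝ) (z : Site d) (m : Fin d) :
    psi c R (z + ev m) + psi c R (z - ev m) - 2 * psi c R z = if z m = 0 then 16 * c * R - 2 * c else -2 * c := by
  rw [← phi_lap]
  have h : ∀ s : ℤ, psi c R (z + s • ev m) - psi c R z = phi c R (z m + s) - phi c R (z m) := by
    intro s
    unfold psi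
    rw [← Finset.sum_sub_distrib, Finset.sum_eq_single m]
    · simp [ev]
    · intro j _ hj; simp [ev, hj]
    · simp
  have h1 := h 1
  have h2 := h (-1)
  simp only [one_smul, neg_smul, ← sub_eq_add_neg] at h1 h2
  linarith

lemma couple_good {d k : ℕ} (c R : ℝ) (hc : 0 ≤ c) (P P' : Conf d k → ℝ) (x x' : Conf d k)
    (hx : x ∈ SSet d k) (hx' : x' ∈ SSet d k) (hg : Good x) (hg' : Good x') (hne : x ≠ x')
    (h : LocMax c R P P' x x') : Lexc P x - Lexc P' x' ≤ -4 * c := by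
  rw [Lexc_good P x hx hg, Lexc_good P' x' hx' hg', ← Finset.sum_sub_distrib]
  have key : ∀ i m, (P (Function.update x i (x i + ev m)) + P (Function.update x i (x i - ev m)) - 2 * P x) -
      (P' (Function.update x' i (x' i + ev m)) + P' (Function.update x' i (x' i - ev m)) - 2 * P' x') ≤
      if x i m = x' i m then 0 else -4 * c := by
    intro i m
    have s1 : ∀ a : Site d, sq (a + ev m - a) = 1 := fun a => by rw [add_sub_cancel_left]; exact sq_ev m
    have s2 : ∀ a : Site d, sq (a - ev m - a) = 1 := fun a => by
      rw [sub_sub_cancel_left, sq_neg]; exact sq_ev m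
    have m1 := good_update x hx hg i _ (s1 (x i))
    have m2 := good_update x hx hg i _ (s2 (x i))
    have m1' := good_update x' hx' hg' i _ (s1 (x' i))
    have m2' := good_update x' hx' hg' i _ (s2 (x' i))
    have c1 : csq (Function.update x i (x i + ev m) - x) ≤ 2 := by rw [csq_update, s1]; norm_num
    have c2 : csq (Function.update x i (x i - ev m) - x) ≤ 2 := by rw [csq_update, s2]; norm_num
    have c1' : csq (Function.update x' i (x' i + ev m) - x') ≤ 2 := by rw [csq_update, s1]; norm_num
    have c2' : csq (Function.update x' i (x' i - ev m) - x') ≤ 2 := by rw [csq_update, s2]; norm_num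
    split_ifs with hz
    · have h1 := h _ _ m1 m1' c1 c1'
      have h2 := h _ _ m2 m2' c2 c2'
      rw [update_sub_both, Psi_update, add_sub_add_right_eq_sub] at h1
      rw [update_sub_both, Psi_update, sub_sub_sub_cancel_right] at h2
      simp only [Pi.sub_apply] at h1 h2
      linarith
    · have h1 := h _ _ m1 hx' c1 (csq_self _)
      have h2 := h _ _ m2 hx' c2 (csq_self _)
      have h3 := h _ _ hx m1' (csq_self _) c1'
      have h4 := h _ _ hx m2' (csq_self _) c2'
      have e := psi_add_ev c R (x i - x' i) m
      rw [if_neg (by simpa [sub_eq_zero] using hz)] at e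
      rw [update_sub_left, Psi_update, show x i + ev m - x' i = x i - x' i + ev m by abel] at h1
      rw [update_sub_left, Psi_update, show x i - ev m - x' i = x i - x' i - ev m by abel] at h2
      rw [update_sub_right, Psi_update, show x i - (x' i + ev m) = x i - x' i - ev m by abel] at h3
      rw [update_sub_right, Psi_update, show x i - (x' i - ev m) = x i - x' i + ev m by abel] at h4
      simp only [Pi.sub_apply] at h1 h2 h3 h4
      linarith
  have hex : ∃ i m, x i m ≠ x' i m := by
    by_contra hc'
    push Not at hc'
    exact hne (funext fun i => funext fun m => hc' i m)
  obtain ⟨i, m, him⟩ := hex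
  have hsum : ∀ l, ∑ r, (P (Function.update x l (x l + ev r)) + P (Function.update x l (x l - ev r)) - 2 * P x) -
      ∑ r, (P' (Function.update x' l (x' l + ev r)) + P' (Function.update x' l (x' l - ev r)) - 2 * P' x') ≤
      ∑ r, (if x l r = x' l r then 0 else -4 * c) := by
    intro l
    rw [← Finset.sum_sub_distrib]
    exact Finset.sum_le_sum fun r _ => key l r
  refine (Finset.sum_le_sum fun l _ => hsum l).trans ?_
  have hnp : ∀ l r, (if x l r = x' l r then 0 else -4 * c) ≤ 0 := by
    intro l r; split_ifs <;> linarith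
  have e1 : ∑ l, ∑ r, (if x l r = x' l r then 0 else -4 * c) ≤ ∑ r, (if x i r = x' i r then 0 else -4 * c) := by
    rw [← Finset.add_sum_erase _ _ (Finset.mem_univ i)]
    have := Finset.sum_nonpos (s := Finset.univ.erase i) fun l _ => Finset.sum_nonpos fun r (_ : r ∈ Finset.univ) => hnp l r
    linarith
  have e2 : ∑ r, (if x i r = x' i r then 0 else -4 * c) ≤ -4 * c := by
    rw [← Finset.add_sum_erase _ _ (Finset.mem_univ m), if_neg him]
    have := Finset.sum_nonpos (s := Finset.univ.erase m) fun r _ => hnp i r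
    linarith
  linarith

lemma couple_one {k : ℕ} (c R : ℝ) (hc : 0 ≤ c) (P P' : Conf 1 k → ℝ) (x x' : Conf 1 k)
    (hx : x ∈ SSet 1 k) (hx' : x' ∈ SSet 1 k) (hne : x ≠ x')
    (h : LocMax c R P P' x x') : Lexc P x - Lexc P' x' ≤ -4 * c := by
  have s1 : edgesOf x ⊆ edgesOf x ∪ edgesOf x' := Finset.subset_union_left
  have s2 : edgesOf x' ⊆ edgesOf x ∪ edgesOf x' := Finset.subset_union_right
  set E := edgesOf x ∪ edgesOf x' with hE
  rw [Lexc_eq P x hx E s1, Lexc_eq P' x' hx' E s2, ← Finset.sum_sub_distrib]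
  have hterm : ∀ b ∈ E, (P (act b x) - P x) - (P' (act b x') - P' x') ≤
      ∑ i, if x i = x' i then 0 else ((psi c R (tau b (x i) - x' i) - psi c R (x i - x' i)) +
        (psi c R (x i - tau b (x' i)) - psi c R (x i - x' i))) := by
    intro b _
    by_cases hsh : ∃ j, x j = x' j ∧ b ∈ edgesAt (x j)
    · obtain ⟨j, hj, hbj⟩ := hsh
      have h1 := h _ _ (act_mem b x hx) (act_mem b x' hx') (csq_act x hx b) (csq_act x' hx' b)
      have h2 : Psi c R (act b x - act b x') - Psi c R (x - x') ≤
          ∑ i, if x i = x' i then 0 else ((psi c R (tau b (x i) - x' i) - psi c R (x i - x' i)) +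
        (psi c R (x i - tau b (x' i)) - psi c R (x i - x' i))) := by
        unfold Psi
        rw [← Finset.sum_sub_distrib]
        refine Finset.sum_le_sum fun i _ => ?_
        simp only [Pi.sub_apply, act]
        split_ifs with hi
        · rw [hi, sub_self, sub_self]; linarith
        · by_cases hb1 : b ∈ edgesAt (x i)
          · by_cases hb2 : b ∈ edgesAt (x' i)
            · exfalso
              have hij : i ≠ j := by rintro rfl; exact hi hj
              have t1 := (tau_two _ _ b hb1 hb2 hi).1
              have t2 := (tau_two _ _ b hb1 hbj (hx i j hij)).1
              have := congrArg (fun e : Equiv.Perm (Site 1) => e (x i)) (t1.symm.trans t2)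
              simp only [Equiv.swap_apply_left] at this
              rw [hj] at this
              exact hx' i j hij this
            · rw [tau_fix _ _ hb2]; linarith
          · rw [tau_fix _ _ hb1]; linarith
      linarith
    · push Not at hsh
      have h1 := h _ _ (act_mem b x hx) hx' (csq_act x hx b) (csq_self _)
      have h2 := h _ _ hx (act_mem b x' hx') (csq_self _) (csq_act x' hx' b)
      have h3 : (Psi c R (act b x - x') - Psi c R (x - x')) + (Psi c R (x - act b x') - Psi c R (x - x')) ≤
          ∑ i, if x i = x' i then 0 else ((psi c R (tau b (x i) - x' i) - psi c R (x i - x' i)) +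
        (psi c R (x i - tau b (x' i)) - psi c R (x i - x' i))) := by
        unfold Psi
        rw [← Finset.sum_sub_distrib, ← Finset.sum_sub_distrib, ← Finset.sum_add_distrib]
        refine Finset.sum_le_sum fun i _ => ?_
        simp only [Pi.sub_apply, act]
        split_ifs with hi
        · have := hsh i hi
          rw [← hi, tau_fix _ _ this]; linarith
        · linarith
      linarith
  refine (Finset.sum_le_sum hterm).trans ?_
  rw [Finset.sum_comm]
  have hi : ∀ i, ∑ b ∈ E, (if x i = x' i then 0 else ((psi c R (tau b (x i) - x' i) - psi c R (x i - x' i)) +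
        (psi c R (x i - tau b (x' i)) - psi c R (x i - x' i)))) = if x i = x' i then 0 else -4 * c := by
    intro i
    split_ifs with hi
    · simp
    · have hm : ∀ m, x i m ≠ x' i m := by
        intro m hm
        apply hi
        funext m'
        rw [Subsingleton.elim m' m]; exact hm
      rw [Finset.sum_add_distrib,
        sum_tau (fun a => psi c R (a - x' i)) (x i) E ((edgesAt_subset x i).trans s1),
        sum_tau (fun a => psi c R (x i - a)) (x' i) E ((edgesAt_subset x' i).trans s2), lap_psi, lap_psi']
      simp [hm]; ring
  rw [Finset.sum_congr rfl fun i _ => hi i]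
  have hex : ∃ i, x i ≠ x' i := by
    by_contra hc'
    push Not at hc'
    exact hne (funext hc')
  obtain ⟨i, hi⟩ := hex
  rw [← Finset.add_sum_erase _ _ (Finset.mem_univ i), if_neg hi]
  have := Finset.sum_nonpos (s := Finset.univ.erase i) (f := fun l => if x l = x' l then 0 else -4 * c) fun l _ => by
    split_ifs <;> linarith
  linarith

/-! ### The doubling-of-variables argument -/

lemma csq_add_le {d k : ℕ} (x z : Conf d k) : csq (x + z) ≤ 2 * csq x + 2 * csq z := by
  have h1 := csq_add x z
  have h2 := csq_add x (-z)
  have e1 : cdot x (-z) = - cdot x z := by simp [cdot]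
  have e2 : csq (-z) = csq z := by simp [csq, sq_neg]
  have h3 := csq_nonneg (x + -z)
  rw [e1, e2] at h2
  linarith

lemma csq_coord {d k : ℕ} (z : Conf d k) (i : Fin k) (m : Fin d) : (z i m : ℝ) ^ 2 ≤ csq z := by
  have e1 : (z i m : ℝ) ^ 2 ≤ sq (z i) :=
    Finset.single_le_sum (f := fun j => ((z i j : ℤ) : ℝ) ^ 2) (s := Finset.univ)
      (fun _ _ => sq_nonneg _) (Finset.mem_univ m)
  exact e1.trans (Finset.single_le_sum (f := fun i => sq (z i)) (s := Finset.univ)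
          (fun _ _ => sq_nonneg' _) (Finset.mem_univ i))

lemma csq_site {d k : ℕ} (z : Conf d k) (i : Fin k) : sq (z i) ≤ csq z :=
  Finset.single_le_sum (f := fun i => sq (z i)) (s := Finset.univ)
          (fun _ _ => sq_nonneg' _) (Finset.mem_univ i)

lemma csq_comm {d k : ℕ} (x z : Conf d k) : csq (x - z) = csq (z - x) := by
  unfold csq
  refine Finset.sum_congr rfl fun i _ => ?_
  rw [← sq_neg]; simp

lemma Psi_nonneg {d k : ℕ} (c R : ℝ) (hc : 0 ≤ c) (hR : 0 ≤ R) (x x' x0 : Conf d k)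
    (h1 : csq (x - x0) ≤ 9 * R ^ 2) (h2 : csq (x' - x0) ≤ 9 * R ^ 2) : 0 ≤ Psi c R (x - x') := by
  refine Finset.sum_nonneg fun i _ => Finset.sum_nonneg fun m _ => ?_
  have e1 : |(x i m : ℝ) - x0 i m| ≤ 3 * R := by
    apply abs_le_of_sq_le_sq _ (by positivity)
    have := csq_coord (x - x0) i m
    simp only [Pi.sub_apply, Int.cast_sub] at this
    nlinarith
  have e2 : |(x' i m : ℝ) - x0 i m| ≤ 3 * R := by
    apply abs_le_of_sq_le_sq _ (by positivity)
    have := csq_coord (x' - x0) i m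
    simp only [Pi.sub_apply, Int.cast_sub] at this
    nlinarith
  have e3 : |(((x - x') i m : ℤ) : ℝ)| ≤ 6 * R := by
    simp only [Pi.sub_apply, Int.cast_sub]
    rw [abs_le] at *
    constructor <;> linarith [e1.1, e1.2, e2.1, e2.2]
  unfold phi
  apply mul_nonneg hc
  rw [← sq_abs (((x - x') i m : ℤ) : ℝ)]
  have := abs_nonneg (((x - x') i m : ℤ) : ℝ)
  nlinarith

lemma Psi_scale {d k : ℕ} (M c R : ℝ) (z : Conf d k) : Psi (M * c) R z = M * Psi c R z := by
  unfold Psi psi phi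
  rw [Finset.mul_sum]
  refine Finset.sum_congr rfl fun i _ => ?_
  rw [Finset.mul_sum]
  refine Finset.sum_congr rfl fun m _ => ?_
  ring

/-- The coupling/generator inequality needed for the barrier. -/
def Barrier {d k : ℕ} (M c R : ℝ) (x0 : Conf d k) (a : Conf d k → ℝ) : Prop :=
  ∀ x x' : Conf d k, x ∈ SSet d k → x' ∈ SSet d k → x ≠ x' → csq (x - x0) < R ^ 2 →
    csq (x' - x0) < R ^ 2 → ∀ P P' : Conf d k → ℝ, LocMax (M * c) R P P' x x' →
    Lexc P x - Lexc P' x' + M * (Lexc a x + Lexc a x') + 2 * M / R ^ 2 < 0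

lemma barrier_bound {d k : ℕ} (y x0 : Conf d k) (R M c t1 t0 : ℝ) (hR : 1 ≤ R) (hM : 0 < M) (hc : 0 ≤ c)
    (ht1 : 0 ≤ t1) (ht : t1 ≤ t0) (a : Conf d k → ℝ)
    (ha : ∀ x, csq (x - x0) ≤ 9 * R ^ 2 → csq (x - x0) / R ^ 2 ≤ a x)
    (hB : Barrier M c R x0 a)
    (hp : ∀ x ∈ SSet d k, csq (x - x0) ≤ 9 * R ^ 2 → ∀ t ∈ Set.Icc t1 t0, ptl t x y ≤ M)
    (h0 : R ^ 2 / 2 ≤ t0 - t1 ∨ ∀ x ∈ SSet d k, csq (x - x0) ≤ 9 * R ^ 2 → ptl t1 x y = 0)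
    (x x' : Conf d k) (hx : x ∈ SSet d k) (hx' : x' ∈ SSet d k) (hxb : csq (x - x0) ≤ 9 * R ^ 2)
    (hxb' : csq (x' - x0) ≤ 9 * R ^ 2) :
    ptl t0 x y - ptl t0 x' y ≤ M * (Psi c R (x - x') + a x + a x') := by
  have hR2 : 0 < R ^ 2 := by positivity
  set F0 := ((csq_finite x0 (9 * R ^ 2)).toFinset).filter (fun z => z ∈ SSet d k) with hF0
  have hF0m : ∀ z, z ∈ F0 ↔ csq (z - x0) ≤ 9 * R ^ 2 ∧ z ∈ SSet d k := by
    intro z; simp [hF0]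
  have hann : ∀ z, csq (z - x0) ≤ 9 * R ^ 2 → 0 ≤ a z := fun z hz =>
    (div_nonneg (csq_nonneg _) hR2.le).trans (ha z hz)
  have hmem : ∀ w : Conf d k × Conf d k, w ∈ F0 ×ˢ F0 ↔
      (csq (w.1 - x0) ≤ 9 * R ^ 2 ∧ w.1 ∈ SSet d k) ∧ (csq (w.2 - x0) ≤ 9 * R ^ 2 ∧ w.2 ∈ SSet d k) := by
    intro w; rw [Finset.mem_product, hF0m, hF0m]
  have hPhi : ∀ w ∈ F0 ×ˢ F0, 0 ≤ Psi c R (w.1 - w.2) := by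
    intro w hw
    rw [hmem] at hw
    exact Psi_nonneg c R hc (by linarith) _ _ x0 hw.1.1 hw.2.1
  have key := finite_max (F0 ×ˢ F0)
    (fun t w => ptl t w.1 y - ptl t w.2 y - M * (Psi c R (w.1 - w.2) + a w.1 + a w.2 + 2 * (t0 - t) / R ^ 2))
    (fun t w => Lexc (fun z => ptl t z y) w.1 - Lexc (fun z => ptl t z y) w.2 - M * (-(2 / R ^ 2))) t1 t0 ?_ ?_ ?_
    (x, x') ((hmem (x, x')).2 ⟨⟨hxb, hx⟩, ⟨hxb', hx'⟩⟩) t0 ⟨ht, le_rfl⟩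
  · simp only [sub_self, mul_zero, zero_div, add_zero] at key
    linarith
  · intro w hw t _
    rw [hmem] at hw
    refine ((ptl_deriv y w.1 hw.1.2 t).sub (ptl_deriv y w.2 hw.2.2 t)).sub ?_
    apply HasDerivAt.const_mul
    have h1 : HasDerivAt (fun s : ℝ => 2 * (t0 - s) / R ^ 2) (2 * (-1) / R ^ 2) t :=
      (((hasDerivAt_id t).const_sub t0).const_mul 2).div_const _
    have h2 := h1.const_add (Psi c R (w.1 - w.2) + a w.1 + a w.2)
    refine h2.congr_deriv ?_
    ring
  · intro w hw
    have hpsi := hPhi w hw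
    rw [hmem] at hw
    have ha1 := hann _ hw.1.1
    have ha2 := hann _ hw.2.1
    have hnn := ptl_nonneg y w.2 hw.2.2 t1 ht1
    have hle := hp w.1 hw.1.2 hw.1.1 t1 ⟨le_rfl, ht⟩
    rcases h0 with h0 | h0
    · have h3 : 1 ≤ 2 * (t0 - t1) / R ^ 2 := by
        rw [le_div_iff₀ hR2]; linarith
      have : M * 1 ≤ M * (Psi c R (w.1 - w.2) + a w.1 + a w.2 + 2 * (t0 - t1) / R ^ 2) :=
        mul_le_mul_of_nonneg_left (by linarith) hM.le
      linarith
    · have h3 : 0 ≤ 2 * (t0 - t1) / R ^ 2 := by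
        apply div_nonneg _ hR2.le; linarith
      have : 0 ≤ M * (Psi c R (w.1 - w.2) + a w.1 + a w.2 + 2 * (t0 - t1) / R ^ 2) :=
        mul_nonneg hM.le (by linarith)
      simp only [h0 _ hw.1.2 hw.1.1, h0 _ hw.2.2 hw.2.1]
      linarith
  · rintro ⟨z, z'⟩ hw t ht' hpos hmax
    have hpsi := hPhi _ hw
    have hw0 := hw
    rw [hmem] at hw
    dsimp only at *
    have htt : 0 ≤ 2 * (t0 - t) / R ^ 2 := by
      apply div_nonneg _ hR2.le; linarith [ht'.2]
    have ha1 := hann _ hw.1.1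
    have ha2 := hann _ hw.2.1
    have hnn := ptl_nonneg y z' hw.2.2 t (ht1.trans ht'.1.le)
    have hle := hp z hw.1.2 hw.1.1 t ⟨ht'.1.le, ht'.2⟩
    have hlt : Psi c R (z - z') + a z + a z' + 2 * (t0 - t) / R ^ 2 < 1 := by
      by_contra hcon
      push Not at hcon
      have := mul_le_mul_of_nonneg_left hcon hM.le
      linarith
    have hne : z ≠ z' := by
      rintro rfl
      have : 0 ≤ M * (Psi c R (z - z) + a z + a z + 2 * (t0 - t) / R ^ 2) :=
        mul_nonneg hM.le (by linarith)
      linarith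
    have hcz : csq (z - x0) < R ^ 2 := by
      have := ha z hw.1.1
      have h3 : csq (z - x0) / R ^ 2 < 1 := by linarith
      rwa [div_lt_one hR2] at h3
    have hcz' : csq (z' - x0) < R ^ 2 := by
      have := ha z' hw.2.1
      have h3 : csq (z' - x0) / R ^ 2 < 1 := by linarith
      rwa [div_lt_one hR2] at h3
    have hnear : ∀ v u : Conf d k, csq (v - x0) < R ^ 2 → csq (u - v) ≤ 2 → csq (u - x0) ≤ 9 * R ^ 2 := by
      intro v u h1 h2
      have := csq_add_le (v - x0) (u - v)
      rw [show v - x0 + (u - v) = u - x0 by abel] at this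
      nlinarith
    have hloc : LocMax (M * c) R (fun v => ptl t v y - M * a v) (fun v => ptl t v y + M * a v) z z' := by
      intro v v' hv hv' h1 h2
      have := hmax (v, v') ((hmem (v, v')).2 ⟨⟨hnear z v hcz h1, hv⟩, ⟨hnear z' v' hcz' h2, hv'⟩⟩)
      rw [Psi_scale, Psi_scale]
      dsimp only at this
      linarith
    have hfin := hB z z' hw.1.2 hw.2.2 hne hcz hcz' _ _ hloc
    rw [Lexc_sub _ _ z hw.1.2, Lexc_mul _ _ z hw.1.2, Lexc_add _ _ z' hw.2.2, Lexc_mul _ _ z' hw.2.2] at hfin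
    have e : M * -(2 / R ^ 2) = - (2 * M / R ^ 2) := by ring
    rw [e]
    have e1 : Lexc (fun z => a z) z = Lexc a z := rfl
    have e2 : Lexc (fun z => a z) z' = Lexc a z' := rfl
    linarith

/-! ### Construction of the barrier -/

lemma Lexc_sum {d k : ℕ} {ι : Type*} (s : Finset ι) (f : ι → Conf d k → ℝ) (x : Conf d k) (hx : x ∈ SSet d k) :
    Lexc (fun z => ∑ i ∈ s, f i z) x = ∑ i ∈ s, Lexc (f i) x := by
  simp only [Lexc_eq _ x hx _ subset_rfl]
  rw [Finset.sum_comm]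
  refine Finset.sum_congr rfl fun b _ => ?_
  rw [Finset.sum_sub_distrib]

lemma sq_add_le {d : ℕ} (a b : Site d) : sq (a + b) ≤ 2 * sq a + 2 * sq b := by
  unfold sq
  rw [Finset.mul_sum, Finset.mul_sum, ← Finset.sum_add_distrib]
  refine Finset.sum_le_sum fun j _ => ?_
  simp only [Pi.add_apply, Int.cast_add]
  nlinarith [sq_nonneg ((a j : ℝ) - b j)]

lemma sq_add3_le {d : ℕ} (a b e : Site d) : sq (a + b + e) ≤ 3 * (sq a + sq b + sq e) := by
  unfold sq
  rw [← Finset.sum_add_distrib, ← Finset.sum_add_distrib, Finset.mul_sum]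
  refine Finset.sum_le_sum fun j _ => ?_
  simp only [Pi.add_apply, Int.cast_add]
  nlinarith [sq_nonneg ((a j : ℝ) - b j), sq_nonneg ((a j : ℝ) - e j), sq_nonneg ((b j : ℝ) - e j)]

lemma barrier_one (k : ℕ) (R M : ℝ) (hR : 1 ≤ R) (hM : 0 < M) (x0 : Conf 1 k) :
    Barrier M ((k + 1) / R ^ 2) R x0 (fun x => (1 / R ^ 2) * csq (x - x0)) := by
  intro x x' hx hx' hne _ _ P P' hloc
  have hR2 : 0 < R ^ 2 := by positivity
  have h1 := couple_one (M * ((k + 1) / R ^ 2)) R (by positivity) P P' x x' hx hx' hne hloc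
  rw [Lexc_mul _ _ x hx, Lexc_mul _ _ x' hx', Lexc_csq _ x hx, Lexc_csq _ x' hx']
  have e : -4 * (M * ((k + 1) / R ^ 2)) + M * (1 / R ^ 2 * (2 * k * (1 : ℕ)) + 1 / R ^ 2 * (2 * k * (1 : ℕ))) + 2 * M / R ^ 2
      = -(2 * M / R ^ 2) := by
    field_simp; push_cast; ring
  have : 0 < 2 * M / R ^ 2 := by positivity
  linarith

def Hf {d k : ℕ} (R : ℝ) (x0 : Conf d k) (z : Conf d k) : ℝ :=
  ∑ i, ∑ j, if i ≠ j ∧ sq (x0 i - x0 j) ≤ 9 * R ^ 2 then Real.log (1 + 81 * R ^ 2) - G (z i - z j) else 0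

lemma Hf_nonneg {d k : ℕ} (R : ℝ) (x0 z : Conf d k) (hz : csq (z - x0) ≤ 9 * R ^ 2) : 0 ≤ Hf R x0 z := by
  refine Finset.sum_nonneg fun i _ => Finset.sum_nonneg fun j _ => ?_
  split_ifs with h
  · rw [sub_nonneg]
    unfold G
    apply Real.log_le_log
    · linarith [sq_nonneg' (z i - z j)]
    · have h1 := sq_add3_le ((z - x0) i) (-((z - x0) j)) (x0 i - x0 j)
      rw [show (z - x0) i + -((z - x0) j) + (x0 i - x0 j) = z i - z j by
        simp only [Pi.sub_apply]; abel, sq_neg] at h1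
      have h2 := csq_site (z - x0) i
      have h3 := csq_site (z - x0) j
      linarith [h.2]
  · exact le_rfl

lemma Hf_le {d k : ℕ} (R : ℝ) (x0 z : Conf d k) : Hf R x0 z ≤ k ^ 2 * Real.log (1 + 81 * R ^ 2) := by
  have hlog : 0 ≤ Real.log (1 + 81 * R ^ 2) := Real.log_nonneg (by nlinarith [sq_nonneg R])
  have : ∀ i j : Fin k, (if i ≠ j ∧ sq (x0 i - x0 j) ≤ 9 * R ^ 2 then Real.log (1 + 81 * R ^ 2) - G (z i - z j) else 0)
      ≤ Real.log (1 + 81 * R ^ 2) := by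
    intro i j
    split_ifs
    · have : 0 ≤ G (z i - z j) := Real.log_nonneg (by linarith [sq_nonneg' (z i - z j)])
      linarith
    · exact hlog
  refine (Finset.sum_le_sum fun i _ => Finset.sum_le_sum fun j _ => this i j).trans (le_of_eq ?_)
  simp; ring

lemma Hf_gen {d k : ℕ} (hd : 2 ≤ d) (R : ℝ) (x0 x : Conf d k) (hx : x ∈ SSet d k) :
    Lexc (Hf R x0) x ≤ 0 ∧
    (∀ i j, i ≠ j → sq (x i - x j) = 1 → sq (x0 i - x0 j) ≤ 9 * R ^ 2 → Lexc (Hf R x0) x ≤ -1) := by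
  have hlog : (1 : ℝ) / 2 < Real.log 2 := by
    have := Real.log_two_gt_d9; linarith
  have e : Lexc (Hf R x0) x = ∑ i, ∑ j, if i ≠ j ∧ sq (x0 i - x0 j) ≤ 9 * R ^ 2 then
      -Lexc (fun z => G (z i - z j)) x else 0 := by
    unfold Hf
    rw [Lexc_sum _ _ x hx]
    refine Finset.sum_congr rfl fun i _ => ?_
    rw [Lexc_sum _ _ x hx]
    refine Finset.sum_congr rfl fun j _ => ?_
    split_ifs
    · rw [Lexc_sub _ _ x hx, Lexc_const _ x hx]; ring
    · exact Lexc_const _ x hx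
  rw [e]
  have hnp : ∀ i j : Fin k, (if i ≠ j ∧ sq (x0 i - x0 j) ≤ 9 * R ^ 2 then
      -Lexc (fun z => G (z i - z j)) x else 0) ≤ 0 := by
    intro i j
    split_ifs with h
    · linarith [(Lexc_pair hd x hx i j h.1).1]
    · exact le_rfl
  refine ⟨Finset.sum_nonpos fun i _ => Finset.sum_nonpos fun j _ => hnp i j, ?_⟩
  intro i j hij hs h0
  rw [← Finset.add_sum_erase _ _ (Finset.mem_univ i), ← Finset.add_sum_erase _ _ (Finset.mem_univ j),
    if_pos ⟨hij, h0⟩]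
  have h1 := Finset.sum_nonpos (s := Finset.univ.erase j) fun l _ => hnp i l
  have h2 := Finset.sum_nonpos (s := Finset.univ.erase i) fun l _ =>
    Finset.sum_nonpos (s := Finset.univ) fun r _ => hnp l r
  have h3 := (Lexc_pair hd x hx i j hij).2 hs
  linarith

lemma barrier_two (d k : ℕ) (hd : 2 ≤ d) (R M K : ℝ) (hR : 1 ≤ R) (hM : 0 < M) (x0 : Conf d k)
    (hK : K = 32 * (k * d) * (k * d + 1) + 4 * (k * d) + 3) :
    Barrier M ((k * d + 1) / R ^ 2) R x0 (fun x => (1 / R ^ 2) * csq (x - x0) + (K / R) * Hf R x0 x) := by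
  intro x x' hx hx' hne hxb hxb' P P' hloc
  have hR2 : 0 < R ^ 2 := by positivity
  have hK0 : 0 < K := by rw [hK]; positivity
  rw [Lexc_add _ _ x hx, Lexc_add _ _ x' hx', Lexc_mul _ _ x hx, Lexc_mul _ _ x' hx',
    Lexc_mul _ _ x hx, Lexc_mul _ _ x' hx', Lexc_csq _ x hx, Lexc_csq _ x' hx']
  have hH := Hf_gen hd R x0 x hx
  have hH' := Hf_gen hd R x0 x' hx'
  change _ + M * (_ + K / R * Lexc (Hf R x0) x + (_ + K / R * Lexc (Hf R x0) x')) + _ < 0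
  have hKR : 0 < K / R := by positivity
  by_cases hg : Good x ∧ Good x'
  · have h1 := couple_good (M * ((k * d + 1) / R ^ 2)) R (by positivity) P P' x x' hx hx' hg.1 hg.2 hne hloc
    have h2 : K / R * Lexc (Hf R x0) x ≤ 0 := mul_nonpos_of_nonneg_of_nonpos hKR.le hH.1
    have h3 : K / R * Lexc (Hf R x0) x' ≤ 0 := mul_nonpos_of_nonneg_of_nonpos hKR.le hH'.1
    have h4 : M * (1 / R ^ 2 * (2 * k * d) + K / R * Lexc (Hf R x0) x + (1 / R ^ 2 * (2 * k * d) + K / R * Lexc (Hf R x0) x'))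
        ≤ M * (1 / R ^ 2 * (2 * k * d) + 1 / R ^ 2 * (2 * k * d)) :=
      mul_le_mul_of_nonneg_left (by linarith) hM.le
    have e : -4 * (M * ((k * d + 1) / R ^ 2)) + M * (1 / R ^ 2 * (2 * k * d) + 1 / R ^ 2 * (2 * k * d)) + 2 * M / R ^ 2
      = -(2 * M / R ^ 2) := by
      field_simp; ring
    have : 0 < 2 * M / R ^ 2 := by positivity
    linarith
  · have h1 := couple_indep (M * ((k * d + 1) / R ^ 2)) R (by positivity) (by linarith) P P' x x' hx hx' hloc
    have hbad : ∀ z : Conf d k, csq (z - x0) < R ^ 2 → ¬ Good z → ∃ i j, i ≠ j ∧ sq (z i - z j) = 1 ∧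
        sq (x0 i - x0 j) ≤ 9 * R ^ 2 := by
      intro z hz hng
      unfold Good at hng
      push Not at hng
      obtain ⟨i, j, hij, hs⟩ := hng
      refine ⟨i, j, hij, hs, ?_⟩
      have h1 := sq_add3_le (-((z - x0) i)) ((z - x0) j) (z i - z j)
      rw [show -((z - x0) i) + ((z - x0) j) + (z i - z j) = x0 i - x0 j by
        simp only [Pi.sub_apply]; abel, sq_neg] at h1
      have h2 := csq_site (z - x0) i
      have h3 := csq_site (z - x0) j
      nlinarith
    have h2 : Lexc (Hf R x0) x + Lexc (Hf R x0) x' ≤ -1 := by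
      by_cases hgx : Good x
      · have hgx' : ¬ Good x' := fun h => hg ⟨hgx, h⟩
        obtain ⟨i, j, a1, a2, a3⟩ := hbad x' hxb' hgx'
        linarith [hH'.2 i j a1 a2 a3, hH.1]
      · obtain ⟨i, j, a1, a2, a3⟩ := hbad x hxb hgx
        linarith [hH.2 i j a1 a2 a3, hH'.1]
    have h3 : K / R * (Lexc (Hf R x0) x + Lexc (Hf R x0) x') ≤ K / R * (-1) :=
      mul_le_mul_of_nonneg_left h2 hKR.le
    have h4 : M * (1 / R ^ 2 * (2 * k * d) + K / R * Lexc (Hf R x0) x + (1 / R ^ 2 * (2 * k * d) + K / R * Lexc (Hf R x0) x'))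
        ≤ M * (1 / R ^ 2 * (2 * k * d) + 1 / R ^ 2 * (2 * k * d) - K / R) :=
      mul_le_mul_of_nonneg_left (by linarith) hM.le
    have hRR : 1 / R ^ 2 ≤ 1 / R := by
      apply one_div_le_one_div_of_le (by positivity); nlinarith
    have e : 32 * (k * d) * (M * ((k * d + 1) / R ^ 2) * R) +
        M * (1 / R ^ 2 * (2 * k * d) + 1 / R ^ 2 * (2 * k * d) - K / R) + 2 * M / R ^ 2
      = M * ((4 * (k * d) + 2) * (1 / R ^ 2) - (4 * (k * d) + 3) * (1 / R)) := by
      rw [hK]; field_simp; ring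
    have h5 : (4 * ((k : ℝ) * d) + 2) * (1 / R ^ 2) ≤ (4 * (k * d) + 2) * (1 / R) :=
      mul_le_mul_of_nonneg_left hRR (by positivity)
    have h6 : 0 < 1 / R := by positivity
    have h7 : M * ((4 * (k * d) + 2) * (1 / R ^ 2) - (4 * (k * d) + 3) * (1 / R)) < 0 :=
      mul_neg_of_pos_of_neg hM (by linarith)
    linarith

lemma barrier_exists (d k : ℕ) (hd : 1 ≤ d) : ∃ K : ℝ, 0 ≤ K ∧ ∀ R M : ℝ, 1 ≤ R → 0 < M → ∀ x0 : Conf d k,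
    ∃ a : Conf d k → ℝ, (∀ x, csq (x - x0) ≤ 9 * R ^ 2 → csq (x - x0) / R ^ 2 ≤ a x) ∧
      (∀ x, a x ≤ csq (x - x0) / R ^ 2 + K / R * Real.log (1 + 81 * R ^ 2)) ∧
      Barrier M ((k * d + 1) / R ^ 2) R x0 a := by
  rcases hd.eq_or_lt with h | h
  · subst h
    refine ⟨0, le_rfl, fun R M hR hM x0 => ⟨fun x => (1 / R ^ 2) * csq (x - x0), ?_, ?_, ?_⟩⟩
    · intro x _; apply le_of_eq; ring
    · intro x; apply le_of_eq; ring
    · have := barrier_one k R M hR hM x0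
      rw [Nat.cast_one, mul_one]
      exact this
  · refine ⟨(32 * (k * d) * (k * d + 1) + 4 * (k * d) + 3) * k ^ 2, by positivity, fun R M hR hM x0 =>
      ⟨_, ?_, ?_, barrier_two d k h R M _ hR hM x0 rfl⟩⟩
    · intro x hx
      have := Hf_nonneg R x0 x hx
      have h2 : 0 ≤ ((32 : ℝ) * (k * d) * (k * d + 1) + 4 * (k * d) + 3) / R * Hf R x0 x := by positivity
      rw [div_eq_mul_one_div]
      linarith
    · intro x
      have h1 := Hf_le R x0 x
      have h2 : (0 : ℝ) ≤ ((32 : ℝ) * (k * d) * (k * d + 1) + 4 * (k * d) + 3) / R := by positivity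
      have h3 := mul_le_mul_of_nonneg_left h1 h2
      have e : ((32 : ℝ) * (k * d) * (k * d + 1) + 4 * (k * d) + 3) * k ^ 2 / R * Real.log (1 + 81 * R ^ 2) =
        ((32 : ℝ) * (k * d) * (k * d + 1) + 4 * (k * d) + 3) / R * (k ^ 2 * Real.log (1 + 81 * R ^ 2)) := by ring
      rw [e, div_eq_mul_one_div (csq (x - x0))]
      linarith

lemma csq_e11 (d k : ℕ) (hd : 1 ≤ d) (hk : 1 ≤ k) : csq (e11 d k) = 1 := by
  obtain ⟨d, rfl⟩ := Nat.exists_eq_add_of_le' hd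
  obtain ⟨k, rfl⟩ := Nat.exists_eq_add_of_le' hk
  unfold csq sq e11
  simp [Fin.sum_univ_succ]
  exact Finset.card_eq_one.2 ⟨0, by ext; simp⟩

lemma Psi_e11 (d k : ℕ) (hd : 1 ≤ d) (hk : 1 ≤ k) (c R : ℝ) : Psi c R (e11 d k) = c * (8 * R - 1) := by
  obtain ⟨d, rfl⟩ := Nat.exists_eq_add_of_le' hd
  obtain ⟨k, rfl⟩ := Nat.exists_eq_add_of_le' hk
  unfold Psi psi phi e11
  simp [Fin.sum_univ_succ]

lemma Psi_neg' {d k : ℕ} (c R : ℝ) (z : Conf d k) : Psi c R (-z) = Psi c R z := by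
  unfold Psi
  exact Finset.sum_congr rfl fun i _ => psi_neg c R (z i)

lemma csq_zero' {d k : ℕ} : csq (0 : Conf d k) = 0 := by
  simp [csq, sq]

lemma main_step (d k : ℕ) (hd : 1 ≤ d) (hk : 1 ≤ k) : ∃ C K : ℝ, 0 < C ∧ 0 ≤ K ∧
    (∀ x y : Conf d k, x ∈ SSet d k → ∀ t : ℝ, 0 ≤ t → ptl t x y ≤ C) ∧
    ∀ x y : Conf d k, x ∈ SSet d k → x + e11 d k ∈ SSet d k → ∀ t : ℝ, 0 ≤ t → ∀ R : ℝ, 1 ≤ R →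
      1 + t + csq (x - y) = 100 * R ^ 2 →
      |ptl t x y - ptl t (x + e11 d k) y| ≤ C / (R / 2) ^ (k * d) *
        ((8 * (k * d + 1) + 1) / R + 2 * K / R * Real.log (1 + 81 * R ^ 2)) := by
  obtain ⟨C, hC, hoff⟩ := ptl_off d k
  obtain ⟨K, hK, hbar⟩ := barrier_exists d k hd
  refine ⟨C, K, hC, hK, ?_, ?_⟩
  · intro x y hx t ht
    refine (hoff y x hx t ht).trans (div_le_self hC.le (one_le_pow₀ ?_))
    rw [Real.one_le_sqrt]
    have := csq_nonneg (x - y)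
    linarith
  intro x y hx hx' t ht R hR hQ
  set M := C / (R / 2) ^ (k * d) with hM
  have hM0 : 0 < M := by positivity
  obtain ⟨a, ha1, ha2, hB⟩ := hbar R M hR hM0 x
  have hpM : ∀ z ∈ SSet d k, ∀ s : ℝ, 0 ≤ s → R ^ 2 / 4 ≤ 1 + s + csq (z - y) → ptl s z y ≤ M := by
    intro z hz s hs h
    refine (hoff y z hz s hs).trans ?_
    have h1 : R / 2 ≤ Real.sqrt (1 + s + csq (z - y)) := by
      apply Real.le_sqrt_of_sq_le
      nlinarith
    rw [hM]
    gcongr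
  have hR2 : 1 ≤ R ^ 2 := by nlinarith
  have key : ∃ t1 : ℝ, 0 ≤ t1 ∧ t1 ≤ t ∧
      (∀ z ∈ SSet d k, csq (z - x) ≤ 9 * R ^ 2 → ∀ s ∈ Set.Icc t1 t, ptl s z y ≤ M) ∧
      (R ^ 2 / 2 ≤ t - t1 ∨ ∀ z ∈ SSet d k, csq (z - x) ≤ 9 * R ^ 2 → ptl t1 z y = 0) := by
    by_cases h : R ^ 2 ≤ t
    · refine ⟨t - R ^ 2 / 2, by linarith, by linarith, ?_, Or.inl (by linarith)⟩
      intro z hz _ s hs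
      have := csq_nonneg (z - y)
      exact hpM z hz s (by linarith [hs.1]) (by linarith [hs.1])
    · push Not at h
      have hfar : ∀ z : Conf d k, csq (z - x) ≤ 9 * R ^ 2 → 40 * R ^ 2 ≤ csq (z - y) := by
        intro z hz
        have h1 := csq_add_le (x - z) (z - y)
        rw [sub_add_sub_cancel, csq_comm x z] at h1
        linarith
      refine ⟨0, le_rfl, ht, ?_, Or.inr ?_⟩
      · intro z hz hzx s hs
        have := hfar z hzx
        exact hpM z hz s hs.1 (by linarith [hs.1])
      · intro z hz hzx
        have := hfar z hzx
        rw [ptl_zero]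
        unfold deltaFn
        rw [if_neg]
        rintro rfl
        rw [sub_self, csq_zero'] at this
        linarith
  obtain ⟨t1, ht1, ht1t, hp, h0⟩ := key
  have hc : (0 : ℝ) ≤ (k * d + 1) / R ^ 2 := by positivity
  have e1 : csq (x - x) = 0 := by rw [sub_self, csq_zero']
  have e2 : csq (x + e11 d k - x) = 1 := by rw [add_sub_cancel_left, csq_e11 d k hd hk]
  have b1 : csq (x - x) ≤ 9 * R ^ 2 := by rw [e1]; positivity
  have b2 : csq (x + e11 d k - x) ≤ 9 * R ^ 2 := by rw [e2]; linarith
  have r1 := barrier_bound y x R M _ t1 t hR hM0 hc ht1 ht1t a ha1 hB hp h0 x (x + e11 d k) hx hx' b1 b2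
  have r2 := barrier_bound y x R M _ t1 t hR hM0 hc ht1 ht1t a ha1 hB hp h0 (x + e11 d k) x hx' hx b2 b1
  have a1 := ha2 x
  have a2 := ha2 (x + e11 d k)
  rw [e1] at a1
  rw [e2] at a2
  have p1 : Psi ((k * d + 1) / R ^ 2) R (x - (x + e11 d k)) = (k * d + 1) / R ^ 2 * (8 * R - 1) := by
    rw [sub_add_cancel_left, Psi_neg', Psi_e11 d k hd hk]
  have p2 : Psi ((k * d + 1) / R ^ 2) R (x + e11 d k - x) = (k * d + 1) / R ^ 2 * (8 * R - 1) := by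
    rw [add_sub_cancel_left, Psi_e11 d k hd hk]
  have hsum : (k * d + 1) / R ^ 2 * (8 * R - 1) + a x + a (x + e11 d k) ≤
      (8 * (k * d + 1) + 1) / R + 2 * K / R * Real.log (1 + 81 * R ^ 2) := by
    have g1 : (k * d + 1) / R ^ 2 * (8 * R - 1) ≤ 8 * (k * d + 1) / R := by
      have : 8 * ((k : ℝ) * d + 1) / R = (k * d + 1) / R ^ 2 * (8 * R) := by field_simp
      rw [this]
      exact mul_le_mul_of_nonneg_left (by linarith) hc
    have g2 : 1 / R ^ 2 ≤ 1 / R := one_div_le_one_div_of_le (by linarith) (by nlinarith)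
    have g3 : (8 * ((k : ℝ) * d + 1) + 1) / R = 8 * (k * d + 1) / R + 1 / R := by ring
    have g4 : 2 * K / R * Real.log (1 + 81 * R ^ 2) = K / R * Real.log (1 + 81 * R ^ 2) + K / R * Real.log (1 + 81 * R ^ 2) := by ring
    rw [zero_div] at a1
    linarith
  rw [p1] at r1
  rw [p2] at r2
  have hmul := mul_le_mul_of_nonneg_left hsum hM0.le
  rw [abs_le]
  constructor
  · have : (k * d + 1) / R ^ 2 * (8 * R - 1) + a (x + e11 d k) + a x =
      (k * d + 1) / R ^ 2 * (8 * R - 1) + a x + a (x + e11 d k) := by ring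
    rw [this] at r2
    linarith
  · linarith

lemma log_step (A K θ R : ℝ) (hA : 0 ≤ A) (hK : 0 ≤ K) (hθ : θ ∈ Set.Ioo (0 : ℝ) 1) (hR : 1 ≤ R) :
    A / R + 2 * K / R * Real.log (1 + 81 * R ^ 2) ≤ (A + 2 * K * (82 / ((1 - θ) / 2))) * R ^ (-θ) := by
  obtain ⟨h0, h1⟩ := hθ
  have hR0 : 0 < R := by linarith
  have hε : 0 < (1 - θ) / 2 := by linarith
  have g1 : 1 / R ≤ R ^ (-θ) := by
    rw [one_div, ← Real.rpow_neg_one]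
    exact Real.rpow_le_rpow_of_exponent_le hR (by linarith)
  have g2 : Real.log (1 + 81 * R ^ 2) ≤ 82 / ((1 - θ) / 2) * R ^ (1 - θ) := by
    calc Real.log (1 + 81 * R ^ 2) ≤ Real.log (82 * R ^ 2) :=
          Real.log_le_log (by positivity) (by nlinarith)
      _ ≤ (82 * R ^ 2) ^ ((1 - θ) / 2) / ((1 - θ) / 2) := Real.log_le_rpow_div (by positivity) hε
      _ = 82 ^ ((1 - θ) / 2) * R ^ (1 - θ) / ((1 - θ) / 2) := by
          rw [Real.mul_rpow (by norm_num) (by positivity), ← Real.rpow_natCast R 2, ← Real.rpow_mul hR0.le]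
          congr 3
          push_cast; ring
      _ ≤ 82 * R ^ (1 - θ) / ((1 - θ) / 2) := by
          gcongr
          calc (82 : ℝ) ^ ((1 - θ) / 2) ≤ 82 ^ (1 : ℝ) :=
                Real.rpow_le_rpow_of_exponent_le (by norm_num) (by linarith)
            _ = 82 := Real.rpow_one _
      _ = _ := by ring
  have g3 : R ^ (1 - θ) / R = R ^ (-θ) := by
    rw [sub_eq_add_neg, Real.rpow_add hR0, Real.rpow_one]; field_simp
  calc A / R + 2 * K / R * Real.log (1 + 81 * R ^ 2)
      ≤ A * (1 / R) + 2 * K / R * (82 / ((1 - θ) / 2) * R ^ (1 - θ)) := by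
        rw [mul_one_div]; gcongr
    _ = A * (1 / R) + 2 * K * (82 / ((1 - θ) / 2)) * (R ^ (1 - θ) / R) := by ring
    _ ≤ A * R ^ (-θ) + 2 * K * (82 / ((1 - θ) / 2)) * R ^ (-θ) := by rw [g3]; gcongr
    _ = _ := by ring

/-- Theorem (main gradient bound on `ℤ^d`): for integers `d, k ≥ 1` and `θ ∈ (0,1)` there is
a constant `C = C(θ,k,d)` such that for all `x, y ∈ 𝕊^k` with `x + e₁₁ ∈ 𝕊^k` and all `t ≥ 0`,
`|p_t^ℓ(x,y) − p_t^ℓ(x+e₁₁,y)| ≤ C (√t + ‖x−y‖ + 1)^{−(kd+θ)}`. -/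
theorem gradient_bound_full_space (d k : ℕ) (hd : 1 ≤ d) (hk : 1 ≤ k)
    (θ : ℝ) (hθ : θ ∈ Set.Ioo (0 : ℝ) 1) :
    ∃ C : ℝ, 0 < C ∧ ∀ x y : Conf d k, x ∈ SSet d k → y ∈ SSet d k →
      x + e11 d k ∈ SSet d k → ∀ t : ℝ, 0 ≤ t →
      |ptl t x y - ptl t (x + e11 d k) y| ≤
        C * (Real.sqrt t + cnorm (x - y) + 1) ^ (-(((k * d : ℕ) : ℝ) + θ)) := by
  obtain ⟨C, K, hC, hK, hle, hmain⟩ := main_step d k hd hk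
  have hε : 0 < (1 - θ) / 2 := by linarith [hθ.2]
  set n := k * d with hn
  set A : ℝ := (8 * ((k : ℝ) * d + 1) + 1) with hA
  have hA0 : 0 < A := by positivity
  set E : ℝ := A + 2 * K * (82 / ((1 - θ) / 2)) with hE
  have hE0 : 0 < E := by positivity
  set W : ℝ := (20 : ℝ) ^ ((n : ℝ) + θ) with hW
  have hW0 : 0 < W := by positivity
  have hexp : -((n : ℝ) + θ) ≤ 0 := by
    have : (0 : ℝ) ≤ n := n.cast_nonneg
    linarith [hθ.1]
  have hW1 : W * (20 : ℝ) ^ (-((n : ℝ) + θ)) = 1 := by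
    rw [hW, ← Real.rpow_add (by norm_num), add_neg_cancel, Real.rpow_zero]
  refine ⟨C * W + C * 2 ^ n * E * W, by positivity, ?_⟩
  intro x y hx hy hx' t ht
  have hq := csq_nonneg (x - y)
  set Q := 1 + t + csq (x - y) with hQ
  have hQ1 : 1 ≤ Q := by linarith
  set R := Real.sqrt Q / 10 with hR
  have hsQ : Real.sqrt Q ^ 2 = Q := Real.sq_sqrt (by linarith)
  have hsQ0 : 0 < Real.sqrt Q := Real.sqrt_pos.2 (by linarith)
  have hR0 : 0 < R := by positivity
  have hQR : Q = 100 * R ^ 2 := by rw [hR, div_pow, hsQ]; ring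
  have hcn : cnorm (x - y) = Real.sqrt (csq (x - y)) := rfl
  set D := Real.sqrt t + cnorm (x - y) + 1 with hD
  have hD1 : 1 ≤ D := by
    rw [hD, hcn]; have := Real.sqrt_nonneg t; have := Real.sqrt_nonneg (csq (x - y)); linarith
  have hDR : D ≤ 20 * R := by
    have h1 : Real.sqrt t ^ 2 = t := Real.sq_sqrt ht
    have h2 : Real.sqrt (csq (x - y)) ^ 2 = csq (x - y) := Real.sq_sqrt hq
    apply le_of_sq_le_sq _ (by positivity)
    rw [hD, hcn]
    nlinarith [sq_nonneg (Real.sqrt t - Real.sqrt (csq (x - y))), sq_nonneg (Real.sqrt t - 1),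
      sq_nonneg (Real.sqrt (csq (x - y)) - 1)]
  have hDp : 0 ≤ D ^ (-((n : ℝ) + θ)) := Real.rpow_nonneg (by linarith) _
  rw [add_mul]
  by_cases h : 1 ≤ R
  · have h1 := hmain x y hx hx' t ht R h hQR
    have h2 := log_step A K θ R hA0.le hK hθ h
    have h3 : R ^ (-((n : ℝ) + θ)) ≤ W * D ^ (-((n : ℝ) + θ)) := by
      have e : (20 * R) ^ (-((n : ℝ) + θ)) ≤ D ^ (-((n : ℝ) + θ)) :=
        Real.rpow_le_rpow_of_nonpos (by linarith) hDR hexp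
      rw [Real.mul_rpow (by norm_num) hR0.le] at e
      calc R ^ (-((n : ℝ) + θ)) = W * (20 ^ (-((n : ℝ) + θ)) * R ^ (-((n : ℝ) + θ))) := by
            rw [← mul_assoc, hW1, one_mul]
        _ ≤ _ := mul_le_mul_of_nonneg_left e hW0.le
    have h4 : C / (R / 2) ^ n * (E * R ^ (-θ)) = C * 2 ^ n * E * R ^ (-((n : ℝ) + θ)) := by
      rw [neg_add, Real.rpow_add hR0, Real.rpow_neg hR0.le (n : ℝ), Real.rpow_natCast, div_pow]
      field_simp
    have h5 : |ptl t x y - ptl t (x + e11 d k) y| ≤ C * 2 ^ n * E * (W * D ^ (-((n : ℝ) + θ))) := by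
      refine h1.trans ((mul_le_mul_of_nonneg_left h2 (by positivity)).trans ?_)
      rw [h4]
      gcongr
    have h6 : 0 ≤ C * W * D ^ (-((n : ℝ) + θ)) := by positivity
    calc _ ≤ _ := h5
      _ = C * 2 ^ n * E * W * D ^ (-((n : ℝ) + θ)) := by ring
      _ ≤ _ := by linarith
  · push Not at h
    have h1 := hle x y hx t ht
    have h2 := hle _ y hx' t ht
    have h3 := ptl_nonneg y x hx t ht
    have h4 := ptl_nonneg y _ hx' t ht
    have h5 : |ptl t x y - ptl t (x + e11 d k) y| ≤ C := by
      rw [abs_le]; constructor <;> linarith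
    have h6 : 1 ≤ W * D ^ (-((n : ℝ) + θ)) := by
      rw [← hW1]
      refine mul_le_mul_of_nonneg_left ?_ hW0.le
      exact Real.rpow_le_rpow_of_nonpos (by linarith) (by linarith) hexp
    have h7 : 0 ≤ C * 2 ^ n * E * W * D ^ (-((n : ℝ) + θ)) := by positivity
    have h8 := mul_le_mul_of_nonneg_left h6 hC.le
    calc _ ≤ _ := h5
      _ ≤ C * W * D ^ (-((n : ℝ) + θ)) := by rw [mul_assoc]; linarith
      _ ≤ _ := by linarith

end SSEPPaper
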